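/- Let v be a harmonic function on the open unit ball B ⊂ ℝⁿ, not identically zero, and set Z = Z(v). Then for every point y₀ ∈ B_{1/2} ∖ Z there exists a constant C₁ = C₁(y₀, Z) > 0 such that for every harmonic function u on B with Z(u) = Z one has sup_{x ∈ B_{1/2}} |u(x)| ≤ C₁ · |u(y₀)|. -/

import Mathlib

open Metric Set Filter

noncomputable section

abbrev En (n : ℕ) : Type := EuclideanSpace ℝ (Fin n)

/-- The Laplacian of `u` at `x`, computed from the second iterated Fréchet derivative. -/
def laplacianAt {n : ℕ} (u : En n → ℝ) (x : En n) : ℝ :=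
  ∑ i : Fin n, iteratedFDeriv ℝ 2 u x ![EuclideanSpace.single i 1, EuclideanSpace.single i 1]

/-- `u` is harmonic on `Ω`: twice continuously differentiable with vanishing Laplacian. -/
def HarmonicOnSet {n : ℕ} (u : En n → ℝ) (Ω : Set (En n)) : Prop :=
  ContDiffOn ℝ 2 u Ω ∧ ∀ x ∈ Ω, laplacianAt u x = 0

/-- The zero set of `u` within `Ω`. -/
def zeroSet {n : ℕ} (u : En n → ℝ) (Ω : Set (En n)) : Set (En n) :=
  {x ∈ Ω | u x = 0}

/-- The collection of nodal domains of `u` in `Ω`, i.e. the connected components of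
`Ω \ Z(u)`. -/
def nodalComponents {n : ℕ} (u : En n → ℝ) (Ω : Set (En n)) : Set (Set (En n)) :=
  {C | ∃ x ∈ Ω \ zeroSet u Ω, C = connectedComponentIn (Ω \ zeroSet u Ω) x}

/-
For harmonic `u` and `v` on a ball of centre `c`, the integral of `u (c + r x) * v (c + s x)` over
the unit ball depends only on the product `r s`: along the radii `exp t * r` and `exp (-t) * s` its
derivative is an integral of the radial Wronskian of the rescaled functions, which vanishes by
Green's identity for the weight `1 - ‖x‖ ^ 2`. The invariance persists for `1_A u` in place of `u`
when `u` and its gradient vanish on the frontier of `A`.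

With `v = 1` this is the mean value property, hence Harnack's inequality; with `u = v` it yields
logarithmic convexity of the `L²` means and so a locally uniform bound on the vanishing order. If
`u` and `v` have the same zeros, then every frontier point of `A = interior {u v ≥ 0}` is a singular
zero of `u`, and comparing the radii `(3 t / 2, 3 t / 2)` with `(t, 9 t / 4)` propagates the zeros
of `1_A u`; therefore `u v` has a constant sign. The invariance now bounds the integral of `|u| |v|`
over the ball of radius `√(ρ σ)` by `sup |u|` at radius `ρ` times `sup |v|` at radius `σ`. As `v`
has bounded vanishing order, this weighted bound controls `|u|` itself on a ball larger than the one
of radius `ρ`, and the control spreads from `y₀` over the whole domain.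
-/

open MeasureTheory InnerProductSpace Laplacian
open scoped Topology Pointwise

section Divergence

lemma inter_frontier_nonempty_of_isPreconnected {X : Type*} [TopologicalSpace X] {s A : Set X}
    (hs : IsPreconnected s) (h₁ : (s ∩ A).Nonempty) (h₂ : (s ∩ Aᶜ).Nonempty) :
    (s ∩ frontier A).Nonempty := by
  rw [frontier_eq_closure_inter_closure]
  exact isPreconnected_closed_iff.1 hs _ _ isClosed_closure isClosed_closure
    (fun x _ => (em (x ∈ A)).imp (subset_closure ·) (subset_closure ·))
    (h₁.mono (inter_subset_inter_right s subset_closure))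
    (h₂.mono (inter_subset_inter_right s subset_closure))

variable {E : Type*} [NormedAddCommGroup E] [NormedSpace ℝ E]

lemma lipschitzWith_indicator_of_eqOn_frontier {A : Set E} {f : E → ℝ} {K : NNReal}
    (hf : LipschitzOnWith K f (closure A)) (h0 : EqOn f 0 (frontier A)) :
    LipschitzWith K (A.indicator f) := by
  have cross : ∀ x ∈ A, ∀ y ∉ A, dist (f x) 0 ≤ K * dist x y := by
    intro x hx y hy
    obtain ⟨z, hz, hzA⟩ := inter_frontier_nonempty_of_isPreconnected
      (convex_segment (𝕜 := ℝ) x y).isPreconnected ⟨x, left_mem_segment ℝ x y, hx⟩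
      ⟨y, right_mem_segment ℝ x y, hy⟩
    calc dist (f x) 0 = dist (f x) (f z) := by rw [h0 hzA, Pi.zero_apply]
      _ ≤ K * dist x z := hf.dist_le_mul _ (subset_closure hx) _ (frontier_subset_closure hzA)
      _ ≤ K * dist x y := by
        have := dist_add_dist_of_mem_segment hz
        gcongr
        linarith [dist_nonneg (x := z) (y := y)]
  refine LipschitzWith.of_dist_le_mul fun x y => ?_
  by_cases hx : x ∈ A <;> by_cases hy : y ∈ A
  · simpa only [indicator_of_mem hx, indicator_of_mem hy] using
      hf.dist_le_mul _ (subset_closure hx) _ (subset_closure hy)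
  · simpa only [indicator_of_mem hx, indicator_of_notMem hy] using cross x hx y hy
  · simpa only [indicator_of_notMem hx, indicator_of_mem hy, dist_comm] using cross y hy x hx
  · simp only [indicator_of_notMem hx, indicator_of_notMem hy, dist_self]
    positivity

lemma hasFDerivAt_indicator_of_notMem_frontier {A : Set E} {f : E → ℝ} {f' : E → E →L[ℝ] ℝ}
    {x : E} (hx : x ∉ frontier A) (hf : x ∈ A → HasFDerivAt f (f' x) x) :
    HasFDerivAt (A.indicator f) (A.indicator f' x) x := by
  have hx' : x ∈ interior A ∪ interior Aᶜ := by
    rwa [← compl_frontier_eq_union_interior]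
  rcases hx' with h | h
  · rw [indicator_of_mem (interior_subset h)]
    refine (hf (interior_subset h)).congr_of_eventuallyEq ?_
    filter_upwards [mem_interior_iff_mem_nhds.1 h] with y hy using indicator_of_mem hy f
  · rw [indicator_of_notMem (interior_subset h)]
    refine (hasFDerivAt_const (0 : ℝ) x).congr_of_eventuallyEq ?_
    filter_upwards [mem_interior_iff_mem_nhds.1 h] with y hy using indicator_of_notMem hy f

lemma hasFDerivAt_indicator_of_eq_zero {A : Set E} {f : E → ℝ} {x : E}
    (hf : HasFDerivAt f (0 : E →L[ℝ] ℝ) x) (h0 : f x = 0) :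
    HasFDerivAt (A.indicator f) (0 : E →L[ℝ] ℝ) x := by
  rw [hasFDerivAt_iff_isLittleO] at hf ⊢
  refine Asymptotics.IsBigO.trans_isLittleO (.of_bound 1 (.of_forall fun y => ?_)) hf
  by_cases hx : x ∈ A <;> by_cases hy : y ∈ A <;> simp [hx, hy, h0]

variable [FiniteDimensional ℝ E] [MeasurableSpace E] [BorelSpace E]
  (μ : Measure E) [μ.IsAddHaarMeasure]

lemma ae_restrict_fderiv_eq_zero_of_eqOn_zero {s : Set E} {f : E → ℝ} (hs : MeasurableSet s)
    (h0 : EqOn f 0 s) (hf : ∀ x ∈ s, DifferentiableAt ℝ f x) :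
    ∀ᵐ x ∂μ.restrict s, fderiv ℝ f x = 0 := by
  rcases subsingleton_or_nontrivial E with h | h
  · exact .of_forall fun x => Subsingleton.elim _ _
  obtain ⟨e, he⟩ := exists_norm_eq E zero_le_one
  have happrox : ApproximatesLinearOn (fun x => f x • e) (0 : E →L[ℝ] E) s 0 := fun x hx y hy => by
    simp [h0 hx, h0 hy]
  filter_upwards [happrox.norm_fderiv_sub_le μ hs (fun x => (fderiv ℝ f x).smulRight e)
    fun x hx => ((hf x hx).hasFDerivAt.smul_const e).hasFDerivWithinAt] with x hx
  have he0 : e ≠ 0 := norm_ne_zero_iff.1 (he ▸ one_ne_zero)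
  simpa [he0] using hx

theorem setIntegral_fderiv_eq_zero_of_eqOn_frontier {A : Set E} {f : E → ℝ} {K : NNReal}
    (hA : MeasurableSet A) (hAb : Bornology.IsBounded A) (hlip : LipschitzOnWith K f (closure A))
    (hf : ∀ x ∈ closure A, DifferentiableAt ℝ f x) (h0 : EqOn f 0 (frontier A)) (e : E) :
    ∫ x in A, fderiv ℝ f x e ∂μ = 0 := by
  have hderiv : ∀ᵐ x ∂μ, HasFDerivAt (A.indicator f) (A.indicator (fderiv ℝ f) x) x := by
    have hfr := (ae_restrict_iff' measurableSet_frontier).1 <|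
      ae_restrict_fderiv_eq_zero_of_eqOn_zero μ measurableSet_frontier h0
        fun x hx => hf x (frontier_subset_closure hx)
    filter_upwards [hfr] with x hx
    by_cases hxA : x ∈ frontier A
    · have hx' : HasFDerivAt f (0 : E →L[ℝ] ℝ) x :=
        hx hxA ▸ (hf x (frontier_subset_closure hxA)).hasFDerivAt
      convert hasFDerivAt_indicator_of_eq_zero (A := A) hx' (h0 hxA) using 1
      rw [indicator_apply_eq_zero]
      exact fun _ => hx hxA
    · exact hasFDerivAt_indicator_of_notMem_frontier hxA fun hx =>
        (hf x (subset_closure hx)).hasFDerivAt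
  have hcompact : HasCompactSupport (A.indicator f) :=
    .intro' (hAb.isCompact_closure) isClosed_closure fun x hx =>
      indicator_of_notMem (fun h => hx (subset_closure h)) f
  have hparts := LipschitzWith.integral_lineDeriv_mul_eq (μ := μ) (LipschitzWith.const (1 : ℝ))
    (lipschitzWith_indicator_of_eqOn_frontier hlip h0) hcompact (-e)
  rw [← integral_indicator hA]
  calc ∫ x, A.indicator (fun x => fderiv ℝ f x e) x ∂μ
      = ∫ x, lineDeriv ℝ (A.indicator f) x e * 1 ∂μ := by
        refine integral_congr_ae ?_
        filter_upwards [hderiv] with x hx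
        rw [hx.hasLineDerivAt e |>.lineDeriv, mul_one]
        by_cases h : x ∈ A <;> simp [h]
    _ = 0 := by simpa [lineDeriv] using hparts.symm

end Divergence

section Green

variable {E : Type*} [NormedAddCommGroup E] [InnerProductSpace ℝ E] {u v : E → ℝ} {x : E}

/-- A zero of `u` at which the gradient of `u` vanishes too. -/
def IsSingularZero (u : E → ℝ) (x : E) : Prop :=
  u x = 0 ∧ fderiv ℝ u x = 0

/-- The function `u` seen on the unit ball after blowing it up to the ball of centre `c` and
radius `r`. -/
def rescale (u : E → ℝ) (c : E) (r : ℝ) (x : E) : ℝ :=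
  u (c + r • x)

lemma fderiv_comp_add_smul {F : Type*} [NormedAddCommGroup F] [NormedSpace ℝ F] (f : E → F)
    (c : E) (r : ℝ) (x : E) :
    fderiv ℝ (fun y => f (c + r • y)) x = r • fderiv ℝ f (c + r • x) := by
  rw [fderiv_comp_smul (f := fun z => f (c + z)), fderiv_comp_add_left]

/-- With `u` and `v` rescaled to the radii `exp t * r` and `exp (-t) * s`, this is the derivative
of their product in `t`. -/
def radialWronskian (u v : E → ℝ) (x : E) : ℝ :=
  v x * fderiv ℝ u x x - u x * fderiv ℝ v x x

/-- The component in direction `e` of Green's field `v ∇u - u ∇v`, cut off by the weight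
`1 - ‖y‖ ^ 2`: the weight removes the boundary term on the unit sphere, and its gradient `-2 y`
turns the divergence of the field into a multiple of `radialWronskian u v`. -/
def greenField (u v : E → ℝ) (e y : E) : ℝ :=
  (1 - ‖y‖ ^ 2) * (v y * fderiv ℝ u y e - u y * fderiv ℝ v y e)

lemma greenField_eq_zero_of_mem_frontier {A : Set E} (e : E)
    (hsing : ∀ x ∈ ball 0 1 ∩ frontier A, IsSingularZero u x)
    (hx : x ∈ frontier (A ∩ ball 0 1)) : greenField u v e x = 0 := by
  have hcl : closure (A ∩ ball 0 1) ⊆ closedBall (0 : E) 1 :=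
    closure_minimal (inter_subset_right.trans ball_subset_closedBall) isClosed_closedBall
  rcases eq_or_ne ‖x‖ 1 with hx1 | hx1
  · simp [greenField, hx1]
  have hxb : x ∈ ball (0 : E) 1 := by
    simpa using lt_of_le_of_ne (by simpa using hcl (frontier_subset_closure hx)) hx1
  have hxA : x ∈ frontier A := (frontier_inter_subset _ _ hx).elim And.left fun h => by
    rw [isOpen_ball.frontier_eq] at h
    exact absurd hxb h.2.2
  obtain ⟨hu0, hdu0⟩ := hsing x ⟨hxb, hxA⟩
  simp [greenField, hu0, hdu0]

variable [FiniteDimensional ℝ E]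

lemma contDiffAt_fderiv_of_harmonicAt (hu : HarmonicAt u x) : ContDiffAt ℝ 1 (fderiv ℝ u) x :=
  hu.1.fderiv_right (by norm_num)

lemma laplacian_eq_sum_fderiv_fderiv {ι : Type*} [Fintype ι] (b : OrthonormalBasis ι ℝ E)
    (hu : ContDiffAt ℝ 2 u x) :
    Δ u x = ∑ i, fderiv ℝ (fun y => fderiv ℝ u y (b i)) x (b i) := by
  rw [laplacian_eq_iteratedFDeriv_orthonormalBasis u b]
  refine Finset.sum_congr rfl fun i _ => ?_
  have hd : DifferentiableAt ℝ (fderiv ℝ u) x :=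
    (hu.fderiv_right (m := 1) (by norm_num)).differentiableAt one_ne_zero
  rw [fderiv_clm_apply hd (differentiableAt_const _), iteratedFDeriv_two_apply]
  simp

lemma laplacian_rescale (u : E → ℝ) (c : E) (r : ℝ) (x : E) :
    Δ (rescale u c r) x = r ^ 2 * Δ u (c + r • x) := by
  have h : fderiv ℝ (rescale u c r) = r • fun y => fderiv ℝ u (c + r • y) :=
    funext fun y => fderiv_comp_add_smul u c r y
  rw [laplacian_eq_iteratedFDeriv_stdOrthonormalBasis,
    laplacian_eq_iteratedFDeriv_stdOrthonormalBasis, Finset.mul_sum]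
  refine Finset.sum_congr rfl fun i _ => ?_
  rw [iteratedFDeriv_two_apply, iteratedFDeriv_two_apply, h,
    fderiv_const_smul_field (𝕜 := ℝ) (f := fun y => fderiv ℝ u (c + r • y)) r,
    Pi.smul_apply, fderiv_comp_add_smul]
  simp only [Fin.isValue, Matrix.cons_val_zero, _root_.smul_apply, Matrix.cons_val_one,
    Matrix.cons_val_fin_one, smul_eq_mul]
  ring

lemma harmonicAt_rescale {c : E} {r : ℝ} (hu : HarmonicAt u (c + r • x)) :
    HarmonicAt (rescale u c r) x := by
  refine ⟨hu.1.comp x (by fun_prop), ?_⟩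
  have hcont : ContinuousAt (fun y : E => c + r • y) x := by fun_prop
  filter_upwards [hcont.eventually hu.2] with y hy
  rw [laplacian_rescale, hy, Pi.zero_apply, Pi.zero_apply, mul_zero]

lemma contDiffAt_greenField (hu : HarmonicAt u x) (hv : HarmonicAt v x) (e : E) :
    ContDiffAt ℝ 1 (greenField u v e) x := by
  have hu₀ : ContDiffAt ℝ 1 u x := hu.1.of_le (by norm_num)
  have hv₀ : ContDiffAt ℝ 1 v x := hv.1.of_le (by norm_num)
  have hu₁ := (contDiffAt_fderiv_of_harmonicAt hu).clm_apply (contDiffAt_const (c := e))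
  have hv₁ := (contDiffAt_fderiv_of_harmonicAt hv).clm_apply (contDiffAt_const (c := e))
  exact (contDiffAt_const.sub (contDiff_norm_sq ℝ).contDiffAt).mul
    ((hv₀.mul hu₁).sub (hu₀.mul hv₁))

lemma sum_fderiv_greenField {ι : Type*} [Fintype ι] (b : OrthonormalBasis ι ℝ E)
    (hu : HarmonicAt u x) (hv : HarmonicAt v x) :
    ∑ i, fderiv ℝ (greenField u v (b i)) x (b i) = -2 * radialWronskian u v x := by
  have hu₀ := (hu.1.differentiableAt two_ne_zero).hasFDerivAt
  have hv₀ := (hv.1.differentiableAt two_ne_zero).hasFDerivAt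
  have hd {w : E → ℝ} (hw : HarmonicAt w x) (i : ι) :
      HasFDerivAt (fun y => fderiv ℝ w y (b i)) (fderiv ℝ (fun y => fderiv ℝ w y (b i)) x) x :=
    (((contDiffAt_fderiv_of_harmonicAt hw).clm_apply contDiffAt_const).differentiableAt
      one_ne_zero).hasFDerivAt
  have hnorm : HasFDerivAt (fun y : E => 1 - ‖y‖ ^ 2) (-(2 • innerSL ℝ x)) x :=
    (hasStrictFDerivAt_norm_sq x).hasFDerivAt.const_sub 1
  have hexpand (w : E → ℝ) : fderiv ℝ w x x = ∑ i, inner ℝ x (b i) * fderiv ℝ w x (b i) := by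
    have hx : fderiv ℝ w x (∑ i, inner ℝ (b i) x • b i) = fderiv ℝ w x x := by rw [b.sum_repr' x]
    simpa [real_inner_comm] using hx.symm
  have hΔu : ∑ i, fderiv ℝ (fun y => fderiv ℝ u y (b i)) x (b i) = 0 := by
    rw [← laplacian_eq_sum_fderiv_fderiv b hu.1, hu.2.self_of_nhds, Pi.zero_apply]
  have hΔv : ∑ i, fderiv ℝ (fun y => fderiv ℝ v y (b i)) x (b i) = 0 := by
    rw [← laplacian_eq_sum_fderiv_fderiv b hv.1, hv.2.self_of_nhds, Pi.zero_apply]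
  calc _ = ∑ i, ((1 - ‖x‖ ^ 2) * (v x * fderiv ℝ (fun y => fderiv ℝ u y (b i)) x (b i)
            - u x * fderiv ℝ (fun y => fderiv ℝ v y (b i)) x (b i))
          + -2 * (v x * (inner ℝ x (b i) * fderiv ℝ u x (b i))
            - u x * (inner ℝ x (b i) * fderiv ℝ v x (b i)))) := by
        refine Finset.sum_congr rfl fun i _ => ?_
        refine (congrArg (· (b i)) (hnorm.mul
          ((hv₀.mul (hd hu i)).sub (hu₀.mul (hd hv i)))).fderiv).trans ?_
        simp only [Pi.sub_apply, Pi.mul_apply, smul_neg, _root_.add_apply, _root_.smul_apply,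
          _root_.sub_apply, smul_eq_mul, _root_.neg_apply, coe_innerSL_apply, nsmul_eq_mul,
          Nat.cast_ofNat, neg_mul]
        ring
    _ = _ := by
        rw [Finset.sum_add_distrib, ← Finset.mul_sum, ← Finset.mul_sum, Finset.sum_sub_distrib,
          Finset.sum_sub_distrib, ← Finset.mul_sum, ← Finset.mul_sum, ← Finset.mul_sum,
          ← Finset.mul_sum, hΔu, hΔv, ← hexpand, ← hexpand, radialWronskian]
        ring

variable [MeasurableSpace E] [BorelSpace E]

theorem setIntegral_radialWronskian_eq_zero {A : Set E} (hA : MeasurableSet A)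
    (hu : HarmonicOnNhd u (closedBall 0 1)) (hv : HarmonicOnNhd v (closedBall 0 1))
    (hsing : ∀ x ∈ ball 0 1 ∩ frontier A, IsSingularZero u x) :
    ∫ x in A ∩ ball 0 1, radialWronskian u v x = 0 := by
  let b := stdOrthonormalBasis ℝ E
  have hf : ∀ i, ∀ x ∈ closedBall (0 : E) 1, ContDiffAt ℝ 1 (greenField u v (b i)) x :=
    fun i x hx => contDiffAt_greenField (hu x hx) (hv x hx) (b i)
  have hcl : closure (A ∩ ball 0 1) ⊆ closedBall (0 : E) 1 :=
    closure_minimal (inter_subset_right.trans ball_subset_closedBall) isClosed_closedBall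
  have hzero : ∀ i, ∫ x in A ∩ ball 0 1, fderiv ℝ (greenField u v (b i)) x (b i) = 0 := by
    intro i
    have hlip : LocallyLipschitzOn (closedBall 0 1) (greenField u v (b i)) := fun x hx => by
      obtain ⟨K, t, ht, hK⟩ := (hf i x hx).exists_lipschitzOnWith
      exact ⟨K, t, mem_nhdsWithin_of_mem_nhds ht, hK⟩
    obtain ⟨K, hK⟩ := hlip.exists_lipschitzOnWith_of_compact (isCompact_closedBall 0 1)
    exact setIntegral_fderiv_eq_zero_of_eqOn_frontier volume (hA.inter measurableSet_ball)
      (isBounded_ball.subset inter_subset_right) (hK.mono hcl)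
      (fun x hx => (hf i x (hcl hx)).differentiableAt one_ne_zero)
      (fun x hx => greenField_eq_zero_of_mem_frontier (b i) hsing hx) (b i)
  have hint : ∀ i, IntegrableOn (fun x => fderiv ℝ (greenField u v (b i)) x (b i))
      (A ∩ ball 0 1) := by
    intro i
    have hcont : ContinuousOn (fun x => fderiv ℝ (greenField u v (b i)) x (b i))
        (closedBall 0 1) := fun x hx =>
      (((hf i x hx).fderiv_right (m := 0) le_rfl).continuousAt.clm_apply
        continuousAt_const).continuousWithinAt
    exact (hcont.integrableOn_compact (isCompact_closedBall 0 1)).mono_set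
      (subset_closure.trans hcl)
  have hsum : ∫ x in A ∩ ball 0 1, -2 * radialWronskian u v x = 0 := by
    calc _ = ∫ x in A ∩ ball 0 1, ∑ i, fderiv ℝ (greenField u v (b i)) x (b i) := by
          refine setIntegral_congr_fun (hA.inter measurableSet_ball) fun x hx => ?_
          have hx' := hcl (subset_closure hx)
          exact (sum_fderiv_greenField b (hu x hx') (hv x hx')).symm
      _ = 0 := by
        rw [integral_finsetSum _ fun i _ => hint i, Finset.sum_eq_zero fun i _ => hzero i]
  rw [integral_const_mul] at hsum
  exact (mul_eq_zero.1 hsum).resolve_left (by norm_num)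

end Green

section Pairing

variable {E : Type*} [NormedAddCommGroup E] [InnerProductSpace ℝ E] {u v : E → ℝ} {A Ω : Set E}
  {c x : E} {R r s t : ℝ}

lemma add_smul_mem_ball {F : Type*} [SeminormedAddCommGroup F] [NormedSpace ℝ F] {c x : F}
    {r R : ℝ} (hr : 0 ≤ r) (hrR : r < R) (hx : x ∈ closedBall (0 : F) 1) :
    c + r • x ∈ ball c R := by
  rw [mem_closedBall_zero_iff] at hx
  rw [mem_ball_iff_norm, add_sub_cancel_left, norm_smul, Real.norm_of_nonneg hr]
  exact (mul_le_of_le_one_right hr hx).trans_lt hrR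

lemma add_smul_mem_ball_of_mem_unitBall {F : Type*} [SeminormedAddCommGroup F] [NormedSpace ℝ F]
    {c x : F} {r : ℝ} (hr : 0 < r) (hx : x ∈ ball (0 : F) 1) : c + r • x ∈ ball c r := by
  rw [mem_ball_iff_norm, add_sub_cancel_left, norm_smul, Real.norm_of_nonneg hr.le]
  exact mul_lt_of_lt_one_right hr (mem_ball_zero_iff.1 hx)

lemma IsSingularZero.rescale (hu : IsSingularZero u (c + r • x)) :
    IsSingularZero (rescale u c r) x :=
  ⟨hu.1, (fderiv_comp_add_smul u c r x).trans (by rw [hu.2, smul_zero])⟩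

lemma hasFDerivAt_indicator_of_singularZero (hu : DifferentiableAt ℝ u x)
    (hsing : x ∈ frontier A → IsSingularZero u x) :
    HasFDerivAt (A.indicator u) (A.indicator (fderiv ℝ u) x) x := by
  by_cases hx : x ∈ frontier A
  · obtain ⟨h0, hd0⟩ := hsing hx
    rw [indicator_apply_eq_zero.2 fun _ => hd0]
    exact hasFDerivAt_indicator_of_eq_zero (hd0 ▸ hu.hasFDerivAt) h0
  · exact hasFDerivAt_indicator_of_notMem_frontier hx fun _ => hu.hasFDerivAt

lemma hasDerivAt_rescale {f : E → ℝ} {f' : E →L[ℝ] ℝ} {a : ℝ → ℝ} {a' : ℝ}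
    (hf : HasFDerivAt f f' (c + a t • x)) (ha : HasDerivAt a a' t) :
    HasDerivAt (fun t => rescale f c (a t) x) (a' * f' x) t := by
  rw [← smul_eq_mul, ← map_smul]
  exact hf.comp_hasDerivAt t ((ha.smul_const x).const_add c)

/-- The set `A` seen on the unit ball after blowing it up to the ball of centre `c` and
radius `r`. -/
def rescaleSet (A : Set E) (c : E) (r : ℝ) : Set E :=
  (fun x => c + r • x) ⁻¹' A

lemma rescale_indicator (A : Set E) (u : E → ℝ) (c : E) (r : ℝ) :
    rescale (A.indicator u) c r = (rescaleSet A c r).indicator (rescale u c r) :=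
  funext fun _ => (indicator_comp_right (fun x => c + r • x)).symm

lemma hasDerivAt_rescale_indicator_mul_rescale
    (hu : DifferentiableAt ℝ u (c + (Real.exp t * r) • x))
    (hv : DifferentiableAt ℝ v (c + (Real.exp (-t) * s) • x))
    (hsing : c + (Real.exp t * r) • x ∈ frontier A →
      IsSingularZero u (c + (Real.exp t * r) • x)) :
    HasDerivAt (fun t => rescale (A.indicator u) c (Real.exp t * r) x
        * rescale v c (Real.exp (-t) * s) x)
      ((rescaleSet A c (Real.exp t * r)).indicator (radialWronskian
        (rescale u c (Real.exp t * r)) (rescale v c (Real.exp (-t) * s))) x) t := by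
  have hr : HasDerivAt (fun t => Real.exp t * r) (Real.exp t * r) t :=
    (Real.hasDerivAt_exp t).mul_const r
  have hs : HasDerivAt (fun t => Real.exp (-t) * s) (-(Real.exp (-t) * s)) t := by
    simpa using (hasDerivAt_neg t).exp.mul_const s
  refine ((hasDerivAt_rescale (a := fun t => Real.exp t * r)
    (hasFDerivAt_indicator_of_singularZero hu hsing) hr).mul
    (hasDerivAt_rescale (a := fun t => Real.exp (-t) * s) hv.hasFDerivAt hs)).congr_deriv ?_
  have hfd {w : E → ℝ} (a : ℝ) : fderiv ℝ (rescale w c a) x x = a * fderiv ℝ w (c + a • x) x :=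
    congrArg (· x) (fderiv_comp_add_smul w c a x)
  rw [rescale_indicator]
  by_cases hx : c + (Real.exp t * r) • x ∈ A
  · have hx' : x ∈ rescaleSet A c (Real.exp t * r) := hx
    rw [indicator_of_mem hx', indicator_of_mem hx', indicator_of_mem hx, radialWronskian, hfd, hfd,
      rescale, rescale]
    ring
  · have hx' : x ∉ rescaleSet A c (Real.exp t * r) := hx
    rw [indicator_of_notMem hx', indicator_of_notMem hx', indicator_of_notMem hx,
      _root_.zero_apply]
    ring

lemma abs_radialWronskian_rescale_le {M : ℝ} (hx : ‖x‖ ≤ 1) (hr : 0 ≤ r) (hs : 0 ≤ s)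
    (hrR : r ≤ R) (hsR : s ≤ R)
    (hu : |u (c + r • x)| ≤ M) (hu' : ‖fderiv ℝ u (c + r • x)‖ ≤ M)
    (hv : |v (c + s • x)| ≤ M) (hv' : ‖fderiv ℝ v (c + s • x)‖ ≤ M) :
    |radialWronskian (rescale u c r) (rescale v c s) x| ≤ 2 * (M * (R * M)) := by
  have hM : 0 ≤ M := (abs_nonneg _).trans hu
  have hfd {w : E → ℝ} {a : ℝ} (ha : 0 ≤ a) (haR : a ≤ R) (hw : ‖fderiv ℝ w (c + a • x)‖ ≤ M) :
      |fderiv ℝ (rescale w c a) x x| ≤ R * M := by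
    calc |fderiv ℝ (rescale w c a) x x| = a * |fderiv ℝ w (c + a • x) x| := by
          rw [show fderiv ℝ (rescale w c a) x = _ from fderiv_comp_add_smul w c a x]
          simp [abs_mul, abs_of_nonneg ha]
      _ ≤ R * M := by
          gcongr
          · exact ha.trans haR
          · exact ((fderiv ℝ w _).le_of_opNorm_le_of_le hw hx).trans_eq (mul_one M)
  calc |radialWronskian (rescale u c r) (rescale v c s) x|
      ≤ |rescale v c s x| * |fderiv ℝ (rescale u c r) x x|
        + |rescale u c r x| * |fderiv ℝ (rescale v c s) x x| := by
        rw [radialWronskian, ← abs_mul, ← abs_mul]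
        exact abs_sub _ _
    _ ≤ M * (R * M) + M * (R * M) :=
        add_le_add (mul_le_mul hv (hfd hr hrR hu') (abs_nonneg _) hM)
          (mul_le_mul hu (hfd hs hsR hv') (abs_nonneg _) hM)
    _ = 2 * (M * (R * M)) := by ring

lemma measurableSet_rescaleSet [MeasurableSpace E] [BorelSpace E] (hA : MeasurableSet A) (c : E)
    (r : ℝ) :
    MeasurableSet (rescaleSet A c r) :=
  hA.preimage (by fun_prop)

variable [FiniteDimensional ℝ E]

lemma harmonicOnNhd_rescale (hu : HarmonicOnNhd u (ball c R)) (hr : 0 ≤ r) (hrR : r < R) :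
    HarmonicOnNhd (rescale u c r) (closedBall 0 1) := fun _ hx =>
  harmonicAt_rescale (hu _ (add_smul_mem_ball hr hrR hx))

lemma continuousOn_fderiv_of_harmonicOnNhd (hu : HarmonicOnNhd u Ω) :
    ContinuousOn (fderiv ℝ u) Ω := fun x hx =>
  (contDiffAt_fderiv_of_harmonicAt (hu x hx)).continuousAt.continuousWithinAt

lemma continuousOn_radialWronskian (hu : HarmonicOnNhd u Ω) (hv : HarmonicOnNhd v Ω) :
    ContinuousOn (radialWronskian u v) Ω :=
  (hv.continuousOn.mul ((continuousOn_fderiv_of_harmonicOnNhd hu).clm_apply continuousOn_id)).sub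
    (hu.continuousOn.mul ((continuousOn_fderiv_of_harmonicOnNhd hv).clm_apply continuousOn_id))

lemma exists_bound_of_harmonicOnNhd (hu : HarmonicOnNhd u Ω) {K : Set E} (hK : IsCompact K)
    (hKΩ : K ⊆ Ω) : ∃ M, ∀ x ∈ K, |u x| ≤ M ∧ ‖fderiv ℝ u x‖ ≤ M := by
  obtain ⟨M, hM⟩ := hK.exists_bound_of_continuousOn (hu.continuousOn.mono hKΩ)
  obtain ⟨M', hM'⟩ := hK.exists_bound_of_continuousOn
    ((continuousOn_fderiv_of_harmonicOnNhd hu).mono hKΩ)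
  exact ⟨max M M', fun x hx => ⟨le_max_of_le_left (hM x hx), le_max_of_le_right (hM' x hx)⟩⟩

lemma exists_abs_radialWronskian_rescale_le (hu : HarmonicOnNhd u (ball c R))
    (hv : HarmonicOnNhd v (ball c R)) {ρ : ℝ} (hρ : ρ < R) :
    ∃ C, ∀ x ∈ ball (0 : E) 1, ∀ r ∈ Ico 0 ρ, ∀ s ∈ Ico 0 ρ,
      |radialWronskian (rescale u c r) (rescale v c s) x| ≤ C := by
  obtain ⟨M, hM⟩ := exists_bound_of_harmonicOnNhd hu (isCompact_closedBall c ρ)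
    (closedBall_subset_ball hρ)
  obtain ⟨N, hN⟩ := exists_bound_of_harmonicOnNhd hv (isCompact_closedBall c ρ)
    (closedBall_subset_ball hρ)
  refine ⟨2 * (max M N * (ρ * max M N)), fun x hx r hr s hs => ?_⟩
  have hx' := ball_subset_closedBall hx
  have hux := hM _ (ball_subset_closedBall (add_smul_mem_ball hr.1 hr.2 hx'))
  have hvx := hN _ (ball_subset_closedBall (add_smul_mem_ball hs.1 hs.2 hx'))
  exact abs_radialWronskian_rescale_le (mem_closedBall_zero_iff.1 hx') hr.1 hs.1
    hr.2.le hs.2.le (le_max_of_le_left hux.1) (le_max_of_le_left hux.2)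
    (le_max_of_le_right hvx.1) (le_max_of_le_right hvx.2)

variable [MeasurableSpace E] [BorelSpace E]

/-- The `L²` pairing over the unit ball of the rescalings of `1_A u` and `v` to the radii `r` and
`s`. -/
def pairing (A : Set E) (u v : E → ℝ) (c : E) (r s : ℝ) : ℝ :=
  ∫ x in ball 0 1, rescale (A.indicator u) c r x * rescale v c s x

lemma integrableOn_unitBall {f : E → ℝ} (hf : ContinuousOn f (closedBall 0 1)) :
    IntegrableOn f (ball 0 1) :=
  (hf.integrableOn_compact (isCompact_closedBall 0 1)).mono_set ball_subset_closedBall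

lemma integrableOn_rescale_indicator_mul (hA : MeasurableSet A)
    (hu : HarmonicOnNhd u (ball c R)) (hv : HarmonicOnNhd v (ball c R)) (hr : r ∈ Ico 0 R)
    (hs : s ∈ Ico 0 R) :
    IntegrableOn (fun x => rescale (A.indicator u) c r x * rescale v c s x) (ball 0 1) := by
  simp only [rescale_indicator, ← indicator_mul_left]
  exact (integrableOn_unitBall ((harmonicOnNhd_rescale hu hr.1 hr.2).continuousOn.mul
    (harmonicOnNhd_rescale hv hs.1 hs.2).continuousOn)).indicator (measurableSet_rescaleSet hA c r)

lemma setIntegral_indicator_radialWronskian_rescale (hA : MeasurableSet A)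
    (hu : HarmonicOnNhd u (ball c R)) (hv : HarmonicOnNhd v (ball c R))
    (hsing : ∀ x ∈ ball c R ∩ frontier A, IsSingularZero u x)
    (hr : 0 ≤ r) (hrR : r < R) (hs : 0 ≤ s) (hsR : s < R) :
    ∫ x in ball 0 1,
      (rescaleSet A c r).indicator (radialWronskian (rescale u c r) (rescale v c s)) x = 0 := by
  rw [setIntegral_indicator (measurableSet_rescaleSet hA c r), inter_comm]
  refine setIntegral_radialWronskian_eq_zero (measurableSet_rescaleSet hA c r)
    (harmonicOnNhd_rescale hu hr hrR) (harmonicOnNhd_rescale hv hs hsR) fun x hx => ?_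
  have hcont : Continuous fun y : E => c + r • y := by fun_prop
  exact (hsing _ ⟨add_smul_mem_ball hr hrR (ball_subset_closedBall hx.1),
    hcont.frontier_preimage_subset A hx.2⟩).rescale

lemma hasDerivAt_pairing_exp (hA : MeasurableSet A) (hu : HarmonicOnNhd u (ball c R))
    (hv : HarmonicOnNhd v (ball c R)) (hsing : ∀ x ∈ ball c R ∩ frontier A, IsSingularZero u x)
    (hr : 0 ≤ r) (hs : 0 ≤ s) (hrR : Real.exp t * r < R) (hsR : Real.exp (-t) * s < R) :
    HasDerivAt (fun t => pairing A u v c (Real.exp t * r) (Real.exp (-t) * s)) 0 t := by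
  obtain ⟨ρ, hρ, hρR⟩ := exists_between (max_lt hrR hsR)
  obtain ⟨C, hC⟩ := exists_abs_radialWronskian_rescale_le hu hv hρR
  let I : Set ℝ := {t | Real.exp t * r < ρ} ∩ {t | Real.exp (-t) * s < ρ}
  have hI : IsOpen I := (isOpen_lt (by fun_prop) (by fun_prop)).inter
    (isOpen_lt (by fun_prop) (by fun_prop))
  have ht : t ∈ I := max_lt_iff.1 hρ
  have hr' (t) : 0 ≤ Real.exp t * r := by positivity
  have hs' (t) : 0 ≤ Real.exp (-t) * s := by positivity
  let W t := (rescaleSet A c (Real.exp t * r)).indicator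
    (radialWronskian (rescale u c (Real.exp t * r)) (rescale v c (Real.exp (-t) * s)))
  have hint : ∀ t ∈ I, IntegrableOn (fun x => rescale (A.indicator u) c (Real.exp t * r) x
      * rescale v c (Real.exp (-t) * s) x) (ball 0 1) := fun t ht =>
    integrableOn_rescale_indicator_mul hA hu hv ⟨hr' t, ht.1.trans hρR⟩ ⟨hs' t, ht.2.trans hρR⟩
  have hWint : IntegrableOn (W t) (ball 0 1) := (integrableOn_unitBall
    (continuousOn_radialWronskian (harmonicOnNhd_rescale hu (hr' t) hrR)
      (harmonicOnNhd_rescale hv (hs' t) hsR))).indicator (measurableSet_rescaleSet hA c _)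
  have hWbound : ∀ x ∈ ball (0 : E) 1, ∀ t ∈ I, ‖W t x‖ ≤ C := fun x hx t ht =>
    (norm_indicator_le_norm_self _ _).trans (hC x hx _ ⟨hr' t, ht.1⟩ _ ⟨hs' t, ht.2⟩)
  have hderiv : ∀ x ∈ ball (0 : E) 1, ∀ t ∈ I, HasDerivAt
      (fun t => rescale (A.indicator u) c (Real.exp t * r) x * rescale v c (Real.exp (-t) * s) x)
      (W t x) t := by
    intro x hx t ht
    have hx' := ball_subset_closedBall hx
    have hxu := add_smul_mem_ball (c := c) (hr' t) (ht.1.trans hρR) hx'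
    have hxv := add_smul_mem_ball (c := c) (hs' t) (ht.2.trans hρR) hx'
    exact hasDerivAt_rescale_indicator_mul_rescale ((hu _ hxu).1.differentiableAt two_ne_zero)
      ((hv _ hxv).1.differentiableAt two_ne_zero) fun h => hsing _ ⟨hxu, h⟩
  have hWzero : ∫ x in ball 0 1, W t x = 0 :=
    setIntegral_indicator_radialWronskian_rescale hA hu hv hsing (hr' t) hrR (hs' t) hsR
  have hmain := hasDerivAt_integral_of_dominated_loc_of_deriv_le (hI.mem_nhds ht)
    (eventually_of_mem (hI.mem_nhds ht) fun t ht => (hint t ht).aestronglyMeasurable)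
    (hint t ht) hWint.aestronglyMeasurable
    (ae_restrict_of_forall_mem measurableSet_ball hWbound)
    (integrableOn_const measure_ball_lt_top.ne)
    (ae_restrict_of_forall_mem measurableSet_ball hderiv)
  exact hWzero ▸ hmain.2

theorem pairing_eq_of_mul_eq (hA : MeasurableSet A) (hu : HarmonicOnNhd u (ball c R))
    (hv : HarmonicOnNhd v (ball c R)) (hsing : ∀ x ∈ ball c R ∩ frontier A, IsSingularZero u x)
    {r' s' : ℝ} (hr : r ∈ Ioo 0 R) (hs : s ∈ Ioo 0 R) (hr' : r' ∈ Ioo 0 R) (hs' : s' ∈ Ioo 0 R)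
    (h : r * s = r' * s') : pairing A u v c r s = pairing A u v c r' s' := by
  let I : Set ℝ := {t | Real.exp t * r < R} ∩ {t | Real.exp (-t) * s < R}
  have hI : IsOpen I := (isOpen_lt (by fun_prop) (by fun_prop)).inter
    (isOpen_lt (by fun_prop) (by fun_prop))
  have hIconn : IsPreconnected I := by
    refine OrdConnected.isPreconnected ⟨fun a ha b hb t ht => ?_⟩
    have h₁ : Real.exp t * r ≤ Real.exp b * r :=
      mul_le_mul_of_nonneg_right (Real.exp_le_exp.2 ht.2) hr.1.le
    have h₂ : Real.exp (-t) * s ≤ Real.exp (-a) * s :=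
      mul_le_mul_of_nonneg_right (Real.exp_le_exp.2 (neg_le_neg ht.1)) hs.1.le
    exact ⟨h₁.trans_lt hb.1, h₂.trans_lt ha.2⟩
  have hderiv : ∀ t ∈ I, HasDerivAt
      (fun t => pairing A u v c (Real.exp t * r) (Real.exp (-t) * s)) 0 t := fun t ht =>
    hasDerivAt_pairing_exp hA hu hv hsing hr.1.le hs.1.le ht.1 ht.2
  have hr'' : Real.exp (Real.log (r' / r)) * r = r' := by
    rw [Real.exp_log (div_pos hr'.1 hr.1), div_mul_cancel₀ _ hr.1.ne']
  have hs'' : Real.exp (-Real.log (r' / r)) * s = s' := by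
    have := hr.1.ne'
    have := hr'.1.ne'
    rw [Real.exp_neg, Real.exp_log (div_pos hr'.1 hr.1)]
    field_simp
    linarith
  have hconst := hI.is_const_of_deriv_eq_zero hIconn
    (fun t ht => (hderiv t ht).differentiableAt.differentiableWithinAt)
    (fun t ht => (hderiv t ht).deriv) (x := 0) (y := Real.log (r' / r))
    ⟨by simpa using hr.2, by simpa using hs.2⟩
    ⟨by simpa only [mem_ofPred_eq, hr''] using hr'.2,
      by simpa only [mem_ofPred_eq, hs''] using hs'.2⟩
  simpa [hr'', hs''] using hconst

end Pairing

section MeanValue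

variable {E : Type*} [NormedAddCommGroup E] [InnerProductSpace ℝ E] [FiniteDimensional ℝ E]
  [MeasurableSpace E] [BorelSpace E] {u : E → ℝ} {c : E} {R r : ℝ}

lemma setIntegral_ball_eq_mul_setIntegral_unitBall (f : E → ℝ) (c : E) (hr : 0 < r) :
    ∫ x in ball c r, f x = r ^ Module.finrank ℝ E * ∫ x in ball 0 1, f (c + r • x) := by
  have hball : r • ball (0 : E) 1 = (c + ·) ⁻¹' ball c r := by
    rw [smul_unitBall_of_pos hr]
    ext x
    simp
  rw [Measure.setIntegral_comp_smul_of_pos volume (fun x => f (c + x)) _ hr, hball,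
    (measurePreserving_add_left volume c).setIntegral_preimage_emb
      (MeasurableEquiv.addLeft c).measurableEmbedding, smul_eq_mul,
    mul_inv_cancel_left₀ (by positivity)]

lemma measureReal_ball_eq_mul_unitBall (c : E) (hr : 0 < r) :
    volume.real (ball c r) = r ^ Module.finrank ℝ E * volume.real (ball (0 : E) 1) := by
  simpa using setIntegral_ball_eq_mul_setIntegral_unitBall (fun _ => (1 : ℝ)) c hr

lemma setAverage_ball_eq_unitBall (f : E → ℝ) (c : E) (hr : 0 < r) :
    ⨍ x in ball c r, f x = ⨍ x in ball 0 1, f (c + r • x) := by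
  rw [setAverage_eq, setAverage_eq, measureReal_ball_eq_mul_unitBall c hr,
    setIntegral_ball_eq_mul_setIntegral_unitBall f c hr, smul_eq_mul, smul_eq_mul, mul_inv,
    mul_mul_mul_comm, inv_mul_cancel₀ (by positivity), one_mul]

lemma integrableOn_ball_of_continuousOn {f : E → ℝ} (hf : ContinuousOn f (ball c R)) (hr : r < R) :
    IntegrableOn f (ball c r) :=
  ((hf.mono (closedBall_subset_ball hr)).integrableOn_compact
    (isCompact_closedBall c r)).mono_set ball_subset_closedBall

lemma setAverage_ball_eq_of_harmonicOnNhd (hu : HarmonicOnNhd u (ball c R)) {s : ℝ}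
    (hr : r ∈ Ioo 0 R) (hs : s ∈ Ioo 0 R) : ⨍ x in ball c r, u x = ⨍ x in ball c s, u x := by
  have h := pairing_eq_of_mul_eq (v := fun _ => 1) MeasurableSet.univ hu (harmonicOnNhd_const 1)
    (by simp) hr hs hs hr (mul_comm r s)
  simp only [pairing, indicator_univ, rescale, mul_one] at h
  rw [setAverage_ball_eq_unitBall u c hr.1, setAverage_ball_eq_unitBall u c hs.1, setAverage_eq,
    setAverage_eq, h]

theorem setAverage_ball_of_harmonicOnNhd (hu : HarmonicOnNhd u (ball c R)) (hr : r ∈ Ioo 0 R) :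
    ⨍ x in ball c r, u x = u c := by
  have hR : 0 < R := hr.1.trans hr.2
  refine eq_of_forall_dist_le fun ε hε => ?_
  have hcont : ContinuousAt u c := hu.continuousOn.continuousAt (ball_mem_nhds c hR)
  obtain ⟨δ, hδ, hδε⟩ := Metric.mem_nhds_iff.1
    (hcont.preimage_mem_nhds (closedBall_mem_nhds (u c) hε))
  obtain ⟨s, hs, hsδ⟩ := exists_between (lt_min hR hδ)
  have hsR := hsδ.trans_le (min_le_left R δ)
  rw [setAverage_ball_eq_of_harmonicOnNhd hu hr ⟨hs, hsR⟩]
  exact (convex_closedBall (u c) ε).set_average_mem isClosed_closedBall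
    (measure_ball_pos volume c hs).ne' measure_ball_lt_top.ne
    (ae_restrict_of_forall_mem measurableSet_ball fun x hx =>
      hδε (ball_subset_ball (hsδ.le.trans (min_le_right R δ)) hx))
    (integrableOn_ball_of_continuousOn hu.continuousOn hsR)

end MeanValue

section Harnack

variable {E : Type*} [NormedAddCommGroup E] [InnerProductSpace ℝ E] [FiniteDimensional ℝ E]
  {u : E → ℝ} {x y : E} {M R : ℝ}

theorem le_mul_of_harmonicOnNhd_of_nonneg (hu : HarmonicOnNhd u (ball x R))
    (h0 : ∀ z ∈ ball x R, 0 ≤ u z) (hy : y ∈ ball x R) :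
    u y ≤ (R / (R - dist y x)) ^ Module.finrank ℝ E * u x := by
  borelize E
  set d := dist y x
  have hd : 0 ≤ d := dist_nonneg
  have hdR : d < R := hy
  have hle : ∀ r ∈ Ioo 0 (R - d), u y ≤ ((r + d) / r) ^ Module.finrank ℝ E * u x := by
    intro r hr
    have hrd : r + d ∈ Ioo 0 R := ⟨by linarith [hr.1], by linarith [hr.2]⟩
    have hsub : ball y r ⊆ ball x (r + d) := ball_subset_ball' le_rfl
    have hint := integrableOn_ball_of_continuousOn hu.continuousOn hrd.2
    have hyR : ball y (R - d) ⊆ ball x R := ball_subset_ball' (by simp [d])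
    have hmono : ∫ z in ball y r, u z ≤ ∫ z in ball x (r + d), u z :=
      setIntegral_mono_set hint (ae_restrict_of_forall_mem measurableSet_ball fun z hz =>
        h0 z (ball_subset_ball hrd.2.le hz)) hsub.eventuallyLE
    rw [← measure_smul_setAverage u measure_ball_lt_top.ne,
      ← measure_smul_setAverage u measure_ball_lt_top.ne,
      setAverage_ball_of_harmonicOnNhd (hu.mono hyR) hr, setAverage_ball_of_harmonicOnNhd hu hrd,
      measureReal_ball_eq_mul_unitBall y hr.1, measureReal_ball_eq_mul_unitBall x hrd.1,
      smul_eq_mul, smul_eq_mul, mul_right_comm, mul_right_comm ((r + d) ^ _)] at hmono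
    have hω : 0 < volume.real (ball (0 : E) 1) :=
      ENNReal.toReal_pos (measure_ball_pos volume 0 one_pos).ne' measure_ball_lt_top.ne
    rw [div_pow, div_mul_eq_mul_div, le_div_iff₀ (pow_pos hr.1 _), mul_comm (u y)]
    exact le_of_mul_le_mul_right hmono hω
  have hlim : Tendsto (fun r => ((r + d) / r) ^ Module.finrank ℝ E * u x) (𝓝[<] (R - d))
      (𝓝 ((R / (R - d)) ^ Module.finrank ℝ E * u x)) := by
    have hcont : ContinuousAt (fun r => ((r + d) / r) ^ Module.finrank ℝ E * u x) (R - d) := by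
      have := (sub_pos.2 hdR).ne'
      fun_prop (disch := assumption)
    simpa using hcont.continuousWithinAt.tendsto (s := Iio (R - d))
  exact ge_of_tendsto hlim
    (eventually_of_mem (Ioo_mem_nhdsLT (sub_pos.2 hdR)) hle)

theorem abs_sub_le_of_harmonicOnNhd_of_abs_le (hu : HarmonicOnNhd u (ball x R))
    (hM : ∀ z ∈ ball x R, |u z| ≤ M) (hy : y ∈ ball x R) :
    |u y - u x| ≤ 2 * ((R / (R - dist y x)) ^ Module.finrank ℝ E - 1) * M := by
  have hM' := fun z hz => abs_le.1 (hM z hz)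
  have hadd := le_mul_of_harmonicOnNhd_of_nonneg (u := fun z => M + u z)
    ((harmonicOnNhd_const M).add hu) (fun z hz => by linarith [(hM' z hz).1]) hy
  have hsub := le_mul_of_harmonicOnNhd_of_nonneg (u := fun z => M - u z)
    ((harmonicOnNhd_const M).sub hu) (fun z hz => by linarith [(hM' z hz).2]) hy
  have hR : dist y x < R := hy
  have hQ : 1 ≤ (R / (R - dist y x)) ^ Module.finrank ℝ E :=
    one_le_pow₀ ((one_le_div (sub_pos.2 hR)).2 (sub_le_self R dist_nonneg))
  have hx := hM' x (mem_ball_self (dist_nonneg.trans_lt hR))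
  rw [abs_le]
  constructor <;> nlinarith

end Harnack

section Propagation

theorem subset_of_forall_ball_subset_imp_closedBall_subset {X : Type*} [MetricSpace X]
    [ProperSpace X] {Ω S : Set X} (hΩ : IsOpen Ω) (hΩc : IsPreconnected Ω) (hS : IsOpen S)
    (hne : (Ω ∩ S).Nonempty)
    (hstep : ∀ c, ∀ t > 0, closedBall c (4 * t) ⊆ Ω → ball c t ⊆ S → closedBall c t ⊆ S) :
    Ω ⊆ S := by
  refine hΩc.subset_of_closure_inter_subset hS hne ?_
  rintro x ⟨hxS, hxΩ⟩
  by_contra hx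
  obtain ⟨ε, hε, hεΩ⟩ := Metric.isOpen_iff.1 hΩ x hxΩ
  obtain ⟨c, hcS, hxc⟩ := Metric.mem_closure_iff.1 hxS (ε / 5) (by positivity)
  have hne' : Sᶜ.Nonempty := ⟨x, hx⟩
  obtain ⟨z, hz, hdist⟩ := hS.isClosed_compl.exists_infDist_eq_dist hne' c
  have ht : 0 < infDist c Sᶜ :=
    (hS.isClosed_compl.notMem_iff_infDist_pos hne').1 (notMem_compl_iff.2 hcS)
  have htx : infDist c Sᶜ ≤ dist c x := infDist_le_dist_of_mem hx
  refine hz (hstep c _ ht (fun y hy => hεΩ ?_) ?_ ?_)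
  · rw [mem_ball]
    rw [mem_closedBall] at hy
    linarith [dist_triangle y c x, dist_comm x c]
  · simpa using ball_infDist_compl_subset (s := S) (x := c)
  · rw [mem_closedBall, dist_comm, hdist]

end Propagation

section UniqueContinuation

lemma eqOn_zero_of_setIntegral_eq_zero {X : Type*} [TopologicalSpace X] [MeasurableSpace X]
    [OpensMeasurableSpace X] {μ : Measure X} [μ.IsOpenPosMeasure] {f : X → ℝ} {U : Set X}
    (hU : IsOpen U) (hf : ContinuousOn f U) (hfi : IntegrableOn f U μ) (h0 : ∀ x ∈ U, 0 ≤ f x)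
    (hint : ∫ x in U, f x ∂μ = 0) : EqOn f 0 U :=
  Measure.eqOn_open_of_ae_eq ((setIntegral_eq_zero_iff_of_nonneg_ae
    (ae_restrict_of_forall_mem hU.measurableSet h0) hfi).1 hint) hU hf continuousOn_const

variable {E : Type*} [NormedAddCommGroup E] [InnerProductSpace ℝ E] [FiniteDimensional ℝ E]
  {u v : E → ℝ} {A Ω : Set E} {c x : E} {R t : ℝ}

lemma continuousOn_indicator_of_singularZero (hu : HarmonicOnNhd u Ω)
    (hsing : ∀ x ∈ Ω ∩ frontier A, IsSingularZero u x) : ContinuousOn (A.indicator u) Ω :=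
  fun x hx => (hasFDerivAt_indicator_of_singularZero ((hu x hx).1.differentiableAt two_ne_zero)
    fun h => hsing x ⟨hx, h⟩).continuousAt.continuousWithinAt

lemma indicator_eq_zero_on_larger_ball [MeasurableSpace E] [BorelSpace E]
    (hA : MeasurableSet A) (hu : HarmonicOnNhd u (ball c R))
    (hv : HarmonicOnNhd v (ball c R)) (hsing : ∀ x ∈ ball c R ∩ frontier A, IsSingularZero u x)
    (hpos : ∀ x ∈ ball c R, 0 ≤ A.indicator u x * v x)
    (hz : ∀ x ∈ ball c R, v x = 0 → A.indicator u x = 0) (ht : 0 < t) (htR : 9 / 4 * t < R)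
    (h0 : ∀ x ∈ ball c t, A.indicator u x = 0) :
    ∀ x ∈ ball c (3 / 2 * t), A.indicator u x = 0 := by
  have hr : 3 / 2 * t ∈ Ioo 0 R := ⟨by positivity, by linarith⟩
  have hmem {x} (hx : x ∈ ball (0 : E) 1) : c + (3 / 2 * t) • x ∈ ball c R :=
    add_smul_mem_ball hr.1.le hr.2 (ball_subset_closedBall hx)
  have hzero : pairing A u v c (3 / 2 * t) (3 / 2 * t) = 0 := by
    rw [pairing_eq_of_mul_eq hA hu hv hsing hr hr (r' := t) (s' := 9 / 4 * t) ⟨ht, by linarith⟩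
      ⟨by positivity, htR⟩ (by ring), pairing]
    refine setIntegral_eq_zero_of_forall_eq_zero fun x hx => ?_
    rw [rescale, h0 _ (add_smul_mem_ball_of_mem_unitBall ht hx), zero_mul]
  have hcont : ContinuousOn (fun x => rescale (A.indicator u) c (3 / 2 * t) x
      * rescale v c (3 / 2 * t) x) (ball 0 1) :=
    ((continuousOn_indicator_of_singularZero hu hsing).mul hv.continuousOn).comp
      (f := fun x => c + (3 / 2 * t) • x) (by fun_prop) fun x hx => hmem hx
  have hprod := eqOn_zero_of_setIntegral_eq_zero isOpen_ball hcont
    (integrableOn_rescale_indicator_mul hA hu hv (Ioo_subset_Ico_self hr)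
      (Ioo_subset_Ico_self hr)) (fun x hx => hpos _ (hmem hx)) hzero
  intro y hy
  obtain ⟨x, hx, rfl⟩ : ∃ x ∈ ball (0 : E) 1, c + (3 / 2 * t) • x = y := by
    have hy' : y ∈ c +ᵥ (3 / 2 * t) • ball (0 : E) 1 := by
      rw [smul_unitBall_of_pos hr.1, vadd_ball_zero]
      exact hy
    simpa [mem_vadd_set, mem_smul_set] using hy'
  exact (mul_eq_zero.1 (hprod hx)).elim id (hz _ (hmem hx))

theorem indicator_eq_zero_of_eventually_eq_zero [MeasurableSpace E] [BorelSpace E]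
    (hA : MeasurableSet A) (hΩ : IsOpen Ω)
    (hΩc : IsPreconnected Ω) (hu : HarmonicOnNhd u Ω) (hv : HarmonicOnNhd v Ω)
    (hsing : ∀ x ∈ Ω ∩ frontier A, IsSingularZero u x) (hpos : ∀ x ∈ Ω, 0 ≤ A.indicator u x * v x)
    (hz : ∀ x ∈ Ω, v x = 0 → A.indicator u x = 0) (hx : x ∈ Ω)
    (h0 : ∀ᶠ y in 𝓝 x, A.indicator u y = 0) : ∀ y ∈ Ω, A.indicator u y = 0 := by
  have hsub := subset_of_forall_ball_subset_imp_closedBall_subset hΩ hΩc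
    (isOpen_interior (s := {y | A.indicator u y = 0})) ⟨x, hx, mem_interior_iff_mem_nhds.2 h0⟩ ?_
  · exact hsub.trans interior_subset
  intro c t ht hball h0
  have hball' := ball_subset_closedBall.trans hball
  have hlarger := indicator_eq_zero_on_larger_ball hA (hu.mono hball') (hv.mono hball')
    (fun x hx => hsing x ⟨hball' hx.1, hx.2⟩) (fun x hx => hpos x (hball' hx))
    (fun x hx => hz x (hball' hx)) ht (by linarith)
    (h0.trans interior_subset)
  exact (closedBall_subset_ball (by linarith)).trans (interior_maximal hlarger isOpen_ball)

theorem eq_zero_of_harmonicOnNhd_of_eventually_eq_zero (hΩ : IsOpen Ω) (hΩc : IsPreconnected Ω)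
    (hu : HarmonicOnNhd u Ω) (hx : x ∈ Ω) (h0 : ∀ᶠ y in 𝓝 x, u y = 0) : ∀ y ∈ Ω, u y = 0 := by
  borelize E
  simpa using indicator_eq_zero_of_eventually_eq_zero MeasurableSet.univ hΩ hΩc hu hu (by simp)
    (fun x _ => by simpa using mul_self_nonneg (u x)) (fun x _ h => by simpa using h) hx
    (by simpa using h0)

end UniqueContinuation

section Sign

lemma exists_nhds_isPreconnected_inter_preimage {X : Type*} [NormedAddCommGroup X]
    [NormedSpace ℝ X] [CompleteSpace X] {f : X → ℝ} {f' : X →L[ℝ] ℝ} {a : X}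
    (hf : HasStrictFDerivAt f f' a) (hf' : f' ≠ 0) {U : Set X} (hU : U ∈ 𝓝 a) :
    ∃ N ∈ 𝓝 a, N ⊆ U ∧ ∀ s : Set ℝ, Convex ℝ s → IsPreconnected (N ∩ f ⁻¹' s) := by
  have hrange : f'.range = ⊤ :=
    LinearMap.range_eq_top.2
      (LinearMap.surjective fun h => hf' (ContinuousLinearMap.coe_injective h))
  let φ := hf.implicitToOpenPartialHomeomorph f f' hrange
  have ha : a ∈ φ.source := hf.mem_implicitToOpenPartialHomeomorph_source hrange
  have hT : φ.symm ⁻¹' U ∩ φ.target ∈ 𝓝 (φ a) :=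
    inter_mem
      ((φ.continuousAt_symm (φ.map_source ha)).preimage_mem_nhds ((φ.left_inv ha).symm ▸ hU))
      (φ.open_target.mem_nhds (φ.map_source ha))
  obtain ⟨ε, hε, hball⟩ := Metric.mem_nhds_iff.1 hT
  have hmem : φ.symm '' ball (φ a) ε ∈ 𝓝 a := by
    rw [φ.symm_image_eq_source_inter_preimage fun p hp => (hball hp).2]
    exact inter_mem (φ.open_source.mem_nhds ha)
      ((φ.continuousAt ha).preimage_mem_nhds (ball_mem_nhds _ hε))
  refine ⟨_, hmem, image_subset_iff.2 fun p hp => (hball hp).1, fun s hs => ?_⟩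
  have himage : φ.symm '' ball (φ a) ε ∩ f ⁻¹' s = φ.symm '' (ball (φ a) ε ∩ Prod.fst ⁻¹' s) := by
    rw [← image_inter_preimage]
    refine congrArg _ (ext fun p => and_congr_right fun hp => ?_)
    have hp' : f (φ.symm p) = p.1 := by
      rw [← hf.implicitToOpenPartialHomeomorph_fst hrange, φ.right_inv (hball hp).2]
    simp only [mem_preimage, hp']
  rw [himage]
  exact ((convex_ball _ _).inter (hs.linear_preimage (LinearMap.fst ℝ ℝ _))).isPreconnected.image _
    (φ.continuousOn_symm.mono fun p hp => (hball hp.1).2)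

lemma forall_nonneg_or_forall_nonpos_of_isPreconnected {X : Type*} [TopologicalSpace X] {s : Set X}
    {f : X → ℝ} (hs : IsPreconnected s) (hf : ContinuousOn f s) (h0 : ∀ x ∈ s, f x ≠ 0) :
    (∀ x ∈ s, 0 ≤ f x) ∨ ∀ x ∈ s, f x ≤ 0 := by
  by_contra! hcon
  obtain ⟨⟨x, hx, hx0⟩, y, hy, hy0⟩ := hcon
  obtain ⟨z, hz, hz0⟩ := hs.intermediate_value hx hy hf ⟨hx0.le, hy0.le⟩
  exact h0 z hz hz0

variable {E : Type*} [NormedAddCommGroup E] [InnerProductSpace ℝ E] {u v : E → ℝ}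
  {Ω : Set E} {x : E}

lemma isSingularZero_of_eventually_eq_zero (h : ∀ᶠ y in 𝓝 x, u y = 0) : IsSingularZero u x :=
  ⟨h.self_of_nhds, (EventuallyEq.fderiv_eq h).trans (fderiv_const_apply 0)⟩

variable [FiniteDimensional ℝ E]

lemma not_isSingularZero_eventually (hu : HarmonicAt u x) (h : ¬IsSingularZero u x) :
    ∀ᶠ y in 𝓝 x, ¬IsSingularZero u y := by
  rcases not_and_or.1 h with h | h
  · exact (hu.1.continuousAt.eventually_ne h).mono fun y hy h => hy h.1
  · exact ((contDiffAt_fderiv_of_harmonicAt hu).continuousAt.eventually_ne h).mono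
      fun y hy h => hy h.2

lemma eventually_eq_zero_of_harmonicAt_of_nonneg (hu : HarmonicAt u x) (hx : u x = 0)
    (h0 : ∀ᶠ y in 𝓝 x, 0 ≤ u y) : ∀ᶠ y in 𝓝 x, u y = 0 := by
  obtain ⟨ε, hε, hball⟩ := Metric.eventually_nhds_iff_ball.1 (hu.eventually.and h0)
  filter_upwards [ball_mem_nhds x hε] with y hy
  refine le_antisymm ?_ (hball y hy).2
  simpa [hx] using le_mul_of_harmonicOnNhd_of_nonneg (fun z hz => (hball z hz).1)
    (fun z hz => (hball z hz).2) hy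

lemma not_eventually_nonneg_of_eq_zero_iff {w : E → ℝ} (hw : HarmonicAt w x)
    (hz : ∀ᶠ y in 𝓝 x, u y = 0 ↔ w y = 0) (hu0 : u x = 0) (hx : ¬IsSingularZero u x) :
    ¬∀ᶠ y in 𝓝 x, 0 ≤ w y := by
  intro hpos
  have hw0 := eventually_eq_zero_of_harmonicAt_of_nonneg hw (hz.self_of_nhds.1 hu0) hpos
  exact hx (isSingularZero_of_eventually_eq_zero
    (by filter_upwards [hw0, hz] with y h₀ h₁ using h₁.2 h₀))

/-- By the implicit function theorem `u > 0` and `u < 0` are connected near a nonsingular zero, so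
`v` has a sign on each; equal signs would make `v` vanish near `x` by Harnack's inequality. -/
lemma eventually_mul_nonneg_or_nonpos_of_not_isSingularZero (hu : HarmonicAt u x)
    (hv : HarmonicAt v x) (hz : ∀ᶠ y in 𝓝 x, u y = 0 ↔ v y = 0) (hx : ¬IsSingularZero u x) :
    (∀ᶠ y in 𝓝 x, 0 ≤ u y * v y) ∨ ∀ᶠ y in 𝓝 x, u y * v y ≤ 0 := by
  by_cases hu0 : u x = 0
  swap
  · have huv : u x * v x ≠ 0 := mul_ne_zero hu0 fun h => hu0 (hz.self_of_nhds.2 h)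
    have hcont := hu.1.continuousAt.mul hv.1.continuousAt
    exact huv.lt_or_gt.symm.imp (fun h => (hcont.eventually_const_lt h).mono fun _ => le_of_lt)
      fun h => (hcont.eventually_lt_const h).mono fun _ => le_of_lt
  obtain ⟨N, hN, hNU, hconn⟩ := exists_nhds_isPreconnected_inter_preimage
    (hu.1.hasStrictFDerivAt two_ne_zero) (fun h => hx ⟨hu0, h⟩) (hz.and hv.eventually)
  have hsign : ∀ s : Set ℝ, Convex ℝ s → 0 ∉ s →
      (∀ y ∈ N ∩ u ⁻¹' s, 0 ≤ v y) ∨ ∀ y ∈ N ∩ u ⁻¹' s, v y ≤ 0 := fun s hs h0 =>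
    forall_nonneg_or_forall_nonpos_of_isPreconnected (hconn s hs)
      (fun y hy => (hNU hy.1).2.1.continuousAt.continuousWithinAt)
      fun y hy h => h0 ((hNU hy.1).1.2 h ▸ hy.2)
  have hcases : ∀ P : E → Prop, (∀ y ∈ N ∩ u ⁻¹' Ioi 0, P y) → (∀ y ∈ N ∩ u ⁻¹' Iio 0, P y) →
      (∀ y, u y = 0 → v y = 0 → P y) → ∀ᶠ y in 𝓝 x, P y := by
    intro P hp hn h0
    filter_upwards [hN] with y hy
    rcases lt_trichotomy (u y) 0 with h | h | h
    exacts [hn y ⟨hy, h⟩, h0 y h ((hNU hy).1.1 h), hp y ⟨hy, h⟩]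
  rcases hsign _ (convex_Ioi 0) (by simp) with hp | hp <;>
    rcases hsign _ (convex_Iio 0) (by simp) with hn | hn
  · exact absurd (hcases _ hp hn fun y _ h => h.ge)
      (not_eventually_nonneg_of_eq_zero_iff hv hz hu0 hx)
  · exact .inl (hcases _ (fun y hy => mul_nonneg (le_of_lt hy.2) (hp y hy))
      (fun y hy => mul_nonneg_of_nonpos_of_nonpos (le_of_lt hy.2) (hn y hy))
      fun y h _ => by simp [h])
  · exact .inr (hcases _ (fun y hy => mul_nonpos_of_nonneg_of_nonpos (le_of_lt hy.2) (hp y hy))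
      (fun y hy => mul_nonpos_of_nonpos_of_nonneg (le_of_lt hy.2) (hn y hy))
      fun y h _ => by simp [h])
  · exact absurd (hcases _ (fun y hy => neg_nonneg.2 (hp y hy))
      (fun y hy => neg_nonneg.2 (hn y hy)) fun y _ h => by simp [h])
      (not_eventually_nonneg_of_eq_zero_iff (w := -v) hv.neg (by simpa using hz) hu0 hx)

lemma isSingularZero_of_mem_frontier (hu : HarmonicAt u x) (hv : HarmonicAt v x)
    (hz : ∀ᶠ y in 𝓝 x, u y = 0 ↔ v y = 0)
    (hx : x ∈ frontier (interior {y | 0 ≤ u y * v y})) : IsSingularZero u x := by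
  by_contra hns
  rw [isOpen_interior.frontier_eq] at hx
  rcases eventually_mul_nonneg_or_nonpos_of_not_isSingularZero hu hv hz hns with h | h
  · exact hx.2 (mem_interior_iff_mem_nhds.2 h)
  · obtain ⟨y, ⟨hyA, hyns⟩⟩ := ((mem_closure_iff_frequently.1 hx.1).and_eventually
      ((not_isSingularZero_eventually hu hns).and (h.and hz).eventually_nhds)).exists
    refine hyns.1 (isSingularZero_of_eventually_eq_zero ?_)
    filter_upwards [mem_interior_iff_mem_nhds.1 hyA, hyns.2] with z h₁ h₂
    exact (mul_eq_zero.1 (le_antisymm h₂.1 h₁)).elim id h₂.2.2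

theorem mul_nonneg_or_mul_nonpos_of_harmonicOnNhd (hΩ : IsOpen Ω) (hΩc : IsPreconnected Ω)
    (hu : HarmonicOnNhd u Ω) (hv : HarmonicOnNhd v Ω) (hz : ∀ x ∈ Ω, u x = 0 ↔ v x = 0) :
    (∀ x ∈ Ω, 0 ≤ u x * v x) ∨ ∀ x ∈ Ω, u x * v x ≤ 0 := by
  borelize E
  by_contra! hcon
  obtain ⟨⟨a, ha, ha0⟩, b, hb, hb0⟩ := hcon
  have hcont : ∀ x ∈ Ω, ContinuousAt (fun y => u y * v y) x := fun x hx =>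
    (hu x hx).1.continuousAt.mul (hv x hx).1.continuousAt
  let A := interior {y | 0 ≤ u y * v y}
  have hAsub : A ⊆ {y | 0 ≤ u y * v y} := interior_subset
  have hbA : b ∈ A :=
    mem_interior_iff_mem_nhds.2 (((hcont b hb).eventually_const_lt hb0).mono fun _ => le_of_lt)
  have haA : ∀ᶠ y in 𝓝 a, A.indicator u y = 0 :=
    ((hcont a ha).eventually_lt_const ha0).mono fun y hy =>
      indicator_of_notMem (fun h => hy.not_ge (hAsub h)) u
  have hzero := indicator_eq_zero_of_eventually_eq_zero isOpen_interior.measurableSet hΩ hΩc hu hv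
    (fun x hx => isSingularZero_of_mem_frontier (hu x hx.1) (hv x hx.1)
      (eventually_of_mem (hΩ.mem_nhds hx.1) hz) hx.2)
    (fun x _ => by
      rw [← indicator_mul_left]
      exact indicator_nonneg (fun y hy => hAsub hy) x)
    (fun x hx h => indicator_apply_eq_zero.2 fun _ => (hz x hx).2 h) ha haA b hb
  rw [indicator_of_mem hbA] at hzero
  simp [hzero] at hb0

end Sign

section VanishingOrder

lemma sq_integral_mul_le {X : Type*} [MeasurableSpace X] {μ : Measure X} {f g : X → ℝ}
    (hff : Integrable (fun x => f x ^ 2) μ) (hgg : Integrable (fun x => g x ^ 2) μ)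
    (hfg : Integrable (fun x => f x * g x) μ) :
    (∫ x, f x * g x ∂μ) ^ 2 ≤ (∫ x, f x ^ 2 ∂μ) * ∫ x, g x ^ 2 ∂μ := by
  have hquad (t : ℝ) : 0 ≤ (∫ x, g x ^ 2 ∂μ) * (t * t) + (2 * ∫ x, f x * g x ∂μ) * t
      + ∫ x, f x ^ 2 ∂μ := by
    calc 0 ≤ ∫ x, (f x + t * g x) ^ 2 ∂μ := integral_nonneg fun x => sq_nonneg _
      _ = ∫ x, (t * t * g x ^ 2 + 2 * t * (f x * g x)) + f x ^ 2 ∂μ :=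
        integral_congr_ae (Eventually.of_forall fun x => by ring)
      _ = _ := by
        rw [integral_add (f := fun x => t * t * g x ^ 2 + 2 * t * (f x * g x))
          ((hgg.const_mul _).add (hfg.const_mul _)) hff,
          integral_add (hgg.const_mul _) (hfg.const_mul _), integral_const_mul, integral_const_mul]
        ring
  have := discrim_le_zero hquad
  rw [discrim] at this
  linarith

lemma mul_pow_le_of_sq_le_mul {a : ℕ → ℝ} {h q : ℝ} (ha : ∀ j, 0 < a j)
    (hlog : ∀ j, a (j + 1) ^ 2 ≤ a j * a (j + 2)) (hq : 0 ≤ q) (h0 : h ≤ a 0)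
    (h1 : q * a 0 ≤ a 1) (j : ℕ) : h * q ^ j ≤ a j := by
  have hratio (j : ℕ) : q * a j ≤ a (j + 1) := by
    induction j with
    | zero => exact h1
    | succ j ih =>
      refine le_of_mul_le_mul_left ?_ (ha j)
      calc a j * (q * a (j + 1)) = q * a j * a (j + 1) := by ring
        _ ≤ a (j + 1) * a (j + 1) := mul_le_mul_of_nonneg_right ih (ha _).le
        _ = a (j + 1) ^ 2 := (sq _).symm
        _ ≤ a j * a (j + 2) := hlog j
  induction j with
  | zero => simpa using h0
  | succ j ih =>
    calc h * q ^ (j + 1) = q * (h * q ^ j) := by ring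
      _ ≤ q * a j := mul_le_mul_of_nonneg_left ih hq
      _ ≤ a (j + 1) := hratio j

lemma div_two_pow_mul_pow_le_of_dyadic {f : ℝ → ℝ} {δ b s : ℝ} {k : ℕ} (hf : MonotoneOn f (Ioc 0 δ))
    (hb : 0 ≤ b) (hdyadic : ∀ j : ℕ, b * (δ * (1 / 2) ^ j) ^ k ≤ f (δ * (1 / 2) ^ j))
    (hs : s ∈ Ioc 0 δ) : b / 2 ^ k * s ^ k ≤ f s := by
  have hδ : 0 < δ := hs.1.trans_le hs.2
  obtain ⟨j, hj, hj'⟩ := exists_nat_pow_near_of_lt_one (div_pos hs.1 hδ)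
    ((div_le_one hδ).2 hs.2) (one_half_pos (α := ℝ)) one_half_lt_one
  rw [lt_div_iff₀ hδ, mul_comm] at hj
  rw [div_le_iff₀ hδ, mul_comm] at hj'
  set r := δ * (1 / 2) ^ (j + 1) with hr
  have hsr : s / 2 ≤ r := by
    rw [hr, pow_succ]
    linarith
  calc b / 2 ^ k * s ^ k = b * (s / 2) ^ k := by rw [div_pow]; ring
    _ ≤ b * r ^ k := mul_le_mul_of_nonneg_left (pow_le_pow_left₀ (half_pos hs.1).le hsr k) hb
    _ ≤ f r := hdyadic (j + 1)
    _ ≤ f s := hf ⟨(half_pos hs.1).trans_le hsr, hj.le.trans hs.2⟩ hs hj.le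

variable {E : Type*} [NormedAddCommGroup E] [InnerProductSpace ℝ E] [FiniteDimensional ℝ E]
  [MeasurableSpace E] [BorelSpace E] {v : E → ℝ} {K Ω : Set E} {c : E} {R r s t M : ℝ}

/-- The mean of `v ^ 2` over `ball c r`, up to the volume of the unit ball: the quantity whose
logarithmic convexity in `log r` controls the vanishing order of `v` at `c`. -/
def sqMean (v : E → ℝ) (c : E) (r : ℝ) : ℝ :=
  ∫ x in ball 0 1, rescale v c r x ^ 2

lemma sq_sqMean_le (hv : HarmonicOnNhd v (ball c R)) (hr : r ∈ Ioo 0 R) (hs : s ∈ Ioo 0 R)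
    (ht : t ∈ Ioo 0 R) (h : r * r = s * t) : sqMean v c r ^ 2 ≤ sqMean v c s * sqMean v c t := by
  have hcont {a : ℝ} (ha : a ∈ Ioo 0 R) : ContinuousOn (rescale v c a) (closedBall 0 1) :=
    (harmonicOnNhd_rescale hv ha.1.le ha.2).continuousOn
  have hpair := pairing_eq_of_mul_eq (A := univ) MeasurableSet.univ hv hv (by simp) hr hr hs ht h
  simp only [pairing, indicator_univ, ← sq] at hpair
  rw [sqMean, hpair]
  exact sq_integral_mul_le (integrableOn_unitBall ((hcont hs).pow 2))
    (integrableOn_unitBall ((hcont ht).pow 2)) (integrableOn_unitBall ((hcont hs).mul (hcont ht)))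

lemma sqMean_pos (hv : HarmonicOnNhd v (ball c R)) (hr : r ∈ Ioo 0 R)
    (hne : ¬∀ᶠ x in 𝓝 c, v x = 0) : 0 < sqMean v c r := by
  have hcont := (harmonicOnNhd_rescale hv hr.1.le hr.2).continuousOn.pow 2
  refine (integral_nonneg fun x => sq_nonneg _).lt_of_ne' fun hint => hne ?_
  have hzero := eqOn_zero_of_setIntegral_eq_zero isOpen_ball (hcont.mono ball_subset_closedBall)
    (integrableOn_unitBall hcont) (fun x _ => sq_nonneg _) hint
  filter_upwards [ball_mem_nhds c hr.1] with x hx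
  have hmem : r⁻¹ • (x - c) ∈ ball (0 : E) 1 := by
    rw [mem_ball_zero_iff, norm_smul, norm_inv, Real.norm_of_nonneg hr.1.le,
      inv_mul_lt_iff₀ hr.1, mul_one]
    exact mem_ball_iff_norm.1 hx
  simpa [rescale, smul_smul, mul_inv_cancel₀ hr.1.ne'] using hzero hmem

lemma continuousOn_sqMean (hv : ContinuousOn v Ω) (hK : IsCompact K)
    (hKΩ : ∀ x ∈ K, closedBall x r ⊆ Ω) (hr : 0 ≤ r) : ContinuousOn (sqMean v · r) K := by
  have hcont : ContinuousOn (fun p : E × E => rescale v p.1 r p.2 ^ 2) (K ×ˢ closedBall 0 1) := by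
    refine (hv.comp (by fun_prop) fun p hp => hKΩ p.1 hp.1 ?_).pow 2
    rw [mem_closedBall_iff_norm, add_sub_cancel_left, norm_smul, Real.norm_of_nonneg hr]
    exact mul_le_of_le_one_right hr (mem_closedBall_zero_iff.1 hp.2)
  obtain ⟨M, hM⟩ := (hK.prod (isCompact_closedBall 0 1)).exists_bound_of_continuousOn hcont
  refine continuousOn_of_dominated (bound := fun _ => M) (fun x hx => ?_) (fun x hx => ?_)
    (integrableOn_const measure_ball_lt_top.ne) ?_
  · exact (integrableOn_unitBall (hcont.comp (f := fun y => (x, y)) (by fun_prop)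
      fun y hy => ⟨hx, hy⟩)).aestronglyMeasurable
  · exact ae_restrict_of_forall_mem measurableSet_ball fun y hy =>
      hM (x, y) ⟨hx, ball_subset_closedBall hy⟩
  · exact ae_restrict_of_forall_mem measurableSet_ball fun y hy =>
      hcont.comp (f := fun x => (x, y)) (by fun_prop) fun x hx => ⟨hx, ball_subset_closedBall hy⟩

lemma exists_mul_pow_le_sqMean (hv : HarmonicOnNhd v Ω) (hne : ∀ x ∈ Ω, ¬∀ᶠ y in 𝓝 x, v y = 0)
    (hK : IsCompact K) (hKΩ : ∀ x ∈ K, ball x R ⊆ Ω) (hr : r ∈ Ioo 0 R) :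
    ∃ h > 0, ∃ q > 0, ∀ x ∈ K, ∀ j : ℕ, h * q ^ j ≤ sqMean v x (r * (1 / 2) ^ j) := by
  have hmem (j : ℕ) : r * (1 / 2) ^ j ∈ Ioo 0 R :=
    ⟨mul_pos hr.1 (by positivity), (mul_le_of_le_one_right hr.1.le
      (pow_le_one₀ (by norm_num) (by norm_num))).trans_lt hr.2⟩
  have hpos (x : E) (hx : x ∈ K) (j : ℕ) : 0 < sqMean v x (r * (1 / 2) ^ j) :=
    sqMean_pos (hv.mono (hKΩ x hx)) (hmem j) (hne x (hKΩ x hx (mem_ball_self (hr.1.trans hr.2))))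
  have hcont (j : ℕ) : ContinuousOn (sqMean v · (r * (1 / 2) ^ j)) K :=
    continuousOn_sqMean hv.continuousOn hK
      (fun x hx => (closedBall_subset_ball (hmem j).2).trans (hKΩ x hx)) (hmem j).1.le
  obtain ⟨h, hh, hle⟩ := hK.exists_forall_le' (hcont 0) fun x hx => hpos x hx 0
  obtain ⟨q, hq, hqle⟩ := hK.exists_forall_le'
    ((hcont 1).div (hcont 0) fun x hx => (hpos x hx 0).ne')
    fun x hx => div_pos (hpos x hx 1) (hpos x hx 0)
  refine ⟨h, hh, q, hq, fun x hx => mul_pow_le_of_sq_le_mul (hpos x hx) (fun j => ?_) hq.le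
    (hle x hx) ((le_div_iff₀ (hpos x hx 0)).1 (hqle x hx))⟩
  exact sq_sqMean_le (hv.mono (hKΩ x hx)) (hmem _) (hmem _) (hmem _) (by ring)

lemma pow_mul_sqMean_le (hv : ContinuousOn v (closedBall c r)) (hr : 0 < r)
    (hM : ∀ x ∈ ball c r, |v x| ≤ M) :
    r ^ Module.finrank ℝ E * sqMean v c r ≤ M * ∫ x in ball c r, |v x| := by
  have hint {f : E → ℝ} (hf : ContinuousOn f (closedBall c r)) : IntegrableOn f (ball c r) :=
    (hf.integrableOn_compact (isCompact_closedBall c r)).mono_set ball_subset_closedBall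
  calc r ^ Module.finrank ℝ E * sqMean v c r = ∫ x in ball c r, v x ^ 2 :=
        (setIntegral_ball_eq_mul_setIntegral_unitBall (fun x => v x ^ 2) c hr).symm
    _ ≤ ∫ x in ball c r, M * |v x| :=
        setIntegral_mono_on (hint (hv.pow 2)) ((hint hv.abs).const_mul M) measurableSet_ball
          fun x hx => by
            rw [← sq_abs, sq]
            exact mul_le_mul_of_nonneg_right (hM x hx) (abs_nonneg _)
    _ = M * ∫ x in ball c r, |v x| := integral_const_mul _ _

lemma mul_pow_le_setIntegral_abs_of_le_sqMean {h q δ : ℝ} {k : ℕ}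
    (hv : ContinuousOn v (closedBall c δ)) (hM0 : 0 < M) (hM : ∀ x ∈ ball c δ, |v x| ≤ M)
    (hh : 0 ≤ h) (hk : (1 / 2) ^ k ≤ q) (hlow : ∀ j : ℕ, h * q ^ j ≤ sqMean v c (δ * (1 / 2) ^ j))
    (hs : s ∈ Ioc 0 δ) :
    h / (M * δ ^ k) / 2 ^ (Module.finrank ℝ E + k) * s ^ (Module.finrank ℝ E + k)
      ≤ ∫ x in ball c s, |v x| := by
  have hδ : 0 < δ := hs.1.trans_le hs.2
  have hint : IntegrableOn (fun x => |v x|) (ball c δ) :=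
    (hv.abs.integrableOn_compact (isCompact_closedBall c δ)).mono_set ball_subset_closedBall
  refine div_two_pow_mul_pow_le_of_dyadic (f := fun s => ∫ x in ball c s, |v x|)
    (fun r _ r' hr' hrr' => ?_) (by positivity) (fun j => ?_) hs
  · exact setIntegral_mono_set (hint.mono_set (ball_subset_ball hr'.2))
      (Eventually.of_forall fun y => abs_nonneg _) (ball_subset_ball hrr').eventuallyLE
  set r := δ * (1 / 2) ^ j
  have hr : 0 < r := by positivity
  have hrδ : r ≤ δ := mul_le_of_le_one_right hδ.le (pow_le_one₀ (by norm_num) (by norm_num))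
  have hqj : (r / δ) ^ k ≤ q ^ j := by
    rw [mul_div_cancel_left₀ _ hδ.ne', ← pow_mul, mul_comm, pow_mul]
    exact pow_le_pow_left₀ (by positivity) hk j
  refine le_of_mul_le_mul_left ?_ hM0
  calc M * (h / (M * δ ^ k) * r ^ (Module.finrank ℝ E + k))
      = r ^ Module.finrank ℝ E * (h * (r / δ) ^ k) := by
        rw [div_pow, pow_add]
        field_simp
    _ ≤ r ^ Module.finrank ℝ E * sqMean v c r := by
        gcongr
        exact (mul_le_mul_of_nonneg_left hqj hh).trans (hlow j)
    _ ≤ M * ∫ x in ball c r, |v x| :=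
        pow_mul_sqMean_le (hv.mono (closedBall_subset_closedBall hrδ)) hr
          fun x hx => hM x (ball_subset_ball hrδ hx)

lemma exists_mul_pow_le_setIntegral_abs (hΩ : IsOpen Ω) (hv : HarmonicOnNhd v Ω)
    (hne : ∀ x ∈ Ω, ¬∀ᶠ y in 𝓝 x, v y = 0) (hK : IsCompact K) (hKΩ : K ⊆ Ω) :
    ∃ δ > 0, ∃ b > 0, ∃ k : ℕ, ∀ x ∈ K, ∀ s ∈ Ioc 0 δ, b * s ^ k ≤ ∫ y in ball x s, |v y| := by
  obtain ⟨R, hR, hthick⟩ := hK.exists_cthickening_subset_open hΩ hKΩ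
  have hsub (x : E) (hx : x ∈ K) : closedBall x R ⊆ cthickening R K :=
    closedBall_subset_cthickening hx R
  have hδ : R / 2 ∈ Ioo 0 R := ⟨half_pos hR, half_lt_self hR⟩
  obtain ⟨M, hM⟩ := hK.cthickening.exists_bound_of_continuousOn (hv.continuousOn.mono hthick)
  obtain ⟨h, hh, q, hq, hlow⟩ := exists_mul_pow_le_sqMean hv hne hK
    (fun x hx => ball_subset_closedBall.trans ((hsub x hx).trans hthick)) hδ
  obtain ⟨k, hk⟩ := exists_pow_lt_of_lt_one hq (one_half_lt_one (α := ℝ))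
  have hδ0 : 0 < R / 2 := hδ.1
  refine ⟨R / 2, hδ0, _, ?_, Module.finrank ℝ E + k, fun x hx s hs =>
    mul_pow_le_setIntegral_abs_of_le_sqMean (M := |M| + 1) ?_ (by positivity) (fun y hy => ?_)
      hh.le hk.le (hlow x hx) hs⟩
  · positivity
  · exact hv.continuousOn.mono
      ((closedBall_subset_closedBall hδ.2.le).trans ((hsub x hx).trans hthick))
  · exact (hM y (hsub x hx (ball_subset_closedBall (ball_subset_ball hδ.2.le hy)))).trans
      ((le_abs_self M).trans (lt_add_one _).le)

end VanishingOrder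

section InteriorEstimate

lemma exists_mem_ball_forall_dist_pow_mul_le {X : Type*} [PseudoMetricSpace X] [ProperSpace X]
    {f : X → ℝ} {c : X} {T : ℝ} {m : ℕ} (hf : ContinuousOn f (closedBall c T)) (hT : 0 < T)
    (hm : m ≠ 0) : ∃ p ∈ ball c T, ∀ y ∈ ball c T,
      (T - dist y c) ^ m * |f y| ≤ (T - dist p c) ^ m * |f p| := by
  obtain ⟨p, hp, hmax⟩ := (isCompact_closedBall c T).exists_isMaxOn (nonempty_closedBall.2 hT.le)
    ((by fun_prop : Continuous fun x => (T - dist x c) ^ m).continuousOn.mul hf.abs)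
  rcases (mem_closedBall.1 hp).lt_or_eq with hpT | hpT
  · exact ⟨p, hpT, fun y hy => hmax (ball_subset_closedBall hy)⟩
  · refine ⟨c, mem_ball_self hT, fun y hy => (hmax (ball_subset_closedBall hy)).trans ?_⟩
    calc (T - dist p c) ^ m * |f p| = 0 := by rw [hpT, sub_self, zero_pow hm, zero_mul]
      _ ≤ (T - dist c c) ^ m * |f c| := by
        rw [dist_self, sub_zero]
        positivity

lemma abs_le_two_pow_mul_of_dist_pow_mul_le {X : Type*} [PseudoMetricSpace X] {f : X → ℝ}
    {c p z : X} {T : ℝ} {m : ℕ} (hp : p ∈ ball c T)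
    (hmax : ∀ y ∈ ball c T, (T - dist y c) ^ m * |f y| ≤ (T - dist p c) ^ m * |f p|)
    (hz : z ∈ ball p ((T - dist p c) / 2)) : |f z| ≤ 2 ^ m * |f p| := by
  set d := (T - dist p c) / 2 with hd
  have hd0 : 0 < d := half_pos (sub_pos.2 hp)
  have hdz : d ≤ T - dist z c := by linarith [dist_triangle z p c, mem_ball.1 hz]
  refine le_of_mul_le_mul_left ?_ (pow_pos hd0 m)
  calc d ^ m * |f z| ≤ (T - dist z c) ^ m * |f z| := by gcongr
    _ ≤ (T - dist p c) ^ m * |f p| := hmax z (sub_pos.1 (hd0.trans_le hdz))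
    _ = d ^ m * (2 ^ m * |f p|) := by
      rw [← mul_assoc, ← mul_pow, hd, div_mul_cancel₀ _ two_ne_zero]

lemma exists_half_abs_le_of_harmonicOnNhd (E : Type*) [NormedAddCommGroup E]
    [InnerProductSpace ℝ E] [FiniteDimensional ℝ E] (N : ℝ) :
    ∃ κ ∈ Ioo (0 : ℝ) 1, ∀ (u : E → ℝ) (p : E) (d : ℝ), HarmonicOnNhd u (ball p d) →
      (∀ z ∈ ball p d, |u z| ≤ N * |u p|) → ∀ z ∈ ball p (κ * d), |u p| / 2 ≤ |u z| := by
  set n := Module.finrank ℝ E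
  have hlim : Tendsto (fun κ : ℝ => 2 * ((1 / (1 - κ)) ^ n - 1) * N) (𝓝[>] 0) (𝓝 0) := by
    have hcont : ContinuousAt (fun κ : ℝ => 2 * ((1 / (1 - κ)) ^ n - 1) * N) 0 := by
      fun_prop (disch := norm_num)
    simpa using hcont.tendsto.mono_left nhdsWithin_le_nhds
  obtain ⟨κ, hκlim, hκ⟩ := ((hlim.eventually_le_const one_half_pos).and
    (Ioo_mem_nhdsGT one_pos)).exists
  refine ⟨κ, hκ, fun u p d hu hN z hz => ?_⟩
  have hd : 0 < d := by
    have := dist_nonneg.trans_lt (mem_ball.1 hz)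
    exact pos_of_mul_pos_right this hκ.1.le
  have hκd : κ * d < d := mul_lt_of_lt_one_left hd hκ.2
  have hratio : d / (d - dist z p) ≤ 1 / (1 - κ) := by
    rw [div_le_div_iff₀ (by linarith [mem_ball.1 hz]) (by linarith [hκ.2])]
    linarith [mem_ball.1 hz]
  have hN0 : 0 ≤ N * |u p| := (abs_nonneg _).trans (hN p (mem_ball_self hd))
  have hosc : |u z - u p| ≤ |u p| / 2 :=
    calc |u z - u p| ≤ 2 * ((d / (d - dist z p)) ^ n - 1) * (N * |u p|) :=
          abs_sub_le_of_harmonicOnNhd_of_abs_le hu hN (ball_subset_ball hκd.le hz)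
      _ ≤ 2 * ((1 / (1 - κ)) ^ n - 1) * (N * |u p|) := by
          have : 0 ≤ d / (d - dist z p) := div_nonneg hd.le (by linarith [mem_ball.1 hz])
          gcongr
      _ = 2 * ((1 / (1 - κ)) ^ n - 1) * N * |u p| := by ring
      _ ≤ 1 / 2 * |u p| := by gcongr
      _ = |u p| / 2 := by ring
  linarith [abs_sub_abs_le_abs_sub (u p) (u z), abs_sub_comm (u p) (u z)]

lemma mul_setIntegral_le_setIntegral_abs_mul {X : Type*} [MeasurableSpace X] {μ : Measure X}
    {u g : X → ℝ} {S S' : Set X} {a : ℝ} (hS : MeasurableSet S) (hS' : MeasurableSet S')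
    (hSS' : S ⊆ S') (hg0 : ∀ x ∈ S', 0 ≤ g x) (hg : IntegrableOn g S μ)
    (hug : IntegrableOn (fun x => |u x| * g x) S' μ) (ha : ∀ x ∈ S, a ≤ |u x|) :
    a * ∫ x in S, g x ∂μ ≤ ∫ x in S', |u x| * g x ∂μ :=
  calc a * ∫ x in S, g x ∂μ = ∫ x in S, a * g x ∂μ := (integral_const_mul _ _).symm
    _ ≤ ∫ x in S, |u x| * g x ∂μ :=
      setIntegral_mono_on (hg.const_mul a) (hug.mono_set hSS') hS
        fun x hx => mul_le_mul_of_nonneg_right (ha x hx) (hg0 x (hSS' hx))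
    _ ≤ ∫ x in S', |u x| * g x ∂μ :=
      setIntegral_mono_set hug (ae_restrict_of_forall_mem hS'
        fun x hx => mul_nonneg (abs_nonneg _) (hg0 x hx)) hSS'.eventuallyLE

variable {E : Type*} [NormedAddCommGroup E] [InnerProductSpace ℝ E] [FiniteDimensional ℝ E]
  [MeasurableSpace E] [BorelSpace E] {g : E → ℝ} {c : E} {T T' b δ : ℝ} {k : ℕ}

/-- At a point `p` where the weighted function on the left is maximal, `|u|` is comparable to
`|u p|` on a ball whose radius is proportional to the distance from `p` to the sphere, and there
`hlow` bounds the mass of `g` from below. -/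
lemma exists_dist_pow_mul_abs_le_setIntegral_abs_mul (hg0 : ∀ x, 0 ≤ g x)
    (hg : IntegrableOn g (closedBall c T)) (hb : 0 < b) (hδ : 0 < δ)
    (hlow : ∀ x ∈ ball c T, ∀ s ∈ Ioc 0 δ, b * s ^ k ≤ ∫ y in ball x s, g y) (hT : 0 < T) :
    ∃ C > 0, ∀ u : E → ℝ, HarmonicOnNhd u (closedBall c T) → ∀ y ∈ ball c T,
      (T - dist y c) ^ (k + 1) * |u y| ≤ C * ∫ x in ball c T, |u x| * g x := by
  obtain ⟨κ₀, hκ₀, hhalf⟩ := exists_half_abs_le_of_harmonicOnNhd E (2 ^ (k + 1))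
  set κ := min κ₀ (δ / T)
  have hκ : 0 < κ := lt_min hκ₀.1 (by positivity)
  refine ⟨2 ^ (k + 2) * T / (b * κ ^ k), by positivity, fun u hu y hy => ?_⟩
  obtain ⟨p, hp, hmax⟩ := exists_mem_ball_forall_dist_pow_mul_le hu.continuousOn hT k.succ_ne_zero
  set d := (T - dist p c) / 2 with hd
  have hd0 : 0 < d := half_pos (sub_pos.2 hp)
  have hdT : d ≤ T := by linarith [dist_nonneg (x := p) (y := c)]
  have hball : ball p d ⊆ ball c T := ball_subset_ball' (by linarith)
  have hκd : κ * d ∈ Ioc 0 δ := ⟨by positivity, by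
    calc κ * d ≤ δ / T * T := mul_le_mul (min_le_right _ _) hdT hd0.le (by positivity)
      _ = δ := div_mul_cancel₀ _ hT.ne'⟩
  have hup (z : E) (hz : z ∈ ball p (κ * d)) : |u p| / 2 ≤ |u z| :=
    hhalf u p d (hu.mono (hball.trans ball_subset_closedBall))
      (fun z hz => abs_le_two_pow_mul_of_dist_pow_mul_le hp hmax hz) z
      (ball_subset_ball (mul_le_mul_of_nonneg_right (min_le_left _ _) hd0.le) hz)
  have hsub : ball p (κ * d) ⊆ ball c T := (ball_subset_ball
    (mul_le_of_le_one_left hd0.le ((min_le_left _ _).trans hκ₀.2.le))).trans hball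
  have hint : |u p| / 2 * (b * (κ * d) ^ k) ≤ ∫ x in ball c T, |u x| * g x :=
    (mul_le_mul_of_nonneg_left (hlow p hp _ hκd) (by positivity)).trans
      (mul_setIntegral_le_setIntegral_abs_mul measurableSet_ball measurableSet_ball hsub
        (fun x _ => hg0 x) (hg.mono_set (hsub.trans ball_subset_closedBall))
        ((hg.continuousOn_mul hu.continuousOn.abs (isCompact_closedBall c T)).mono_set
          ball_subset_closedBall) hup)
  calc (T - dist y c) ^ (k + 1) * |u y| ≤ (T - dist p c) ^ (k + 1) * |u p| := hmax y hy
    _ = 2 ^ (k + 2) * d * (|u p| / 2 * d ^ k) := by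
        rw [show T - dist p c = 2 * d by rw [hd]; ring, mul_pow]
        ring
    _ ≤ 2 ^ (k + 2) * T * (|u p| / 2 * d ^ k) := by gcongr
    _ = 2 ^ (k + 2) * T / (b * κ ^ k) * (|u p| / 2 * (b * (κ * d) ^ k)) := by
        rw [mul_pow]
        field_simp
    _ ≤ 2 ^ (k + 2) * T / (b * κ ^ k) * ∫ x in ball c T, |u x| * g x := by gcongr

lemma exists_abs_le_setIntegral_abs_mul (hg0 : ∀ x, 0 ≤ g x)
    (hg : IntegrableOn g (closedBall c T)) (hb : 0 < b) (hδ : 0 < δ)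
    (hlow : ∀ x ∈ ball c T, ∀ s ∈ Ioc 0 δ, b * s ^ k ≤ ∫ y in ball x s, g y) (hT : 0 < T)
    (hT' : T' < T) :
    ∃ C > 0, ∀ u : E → ℝ, HarmonicOnNhd u (closedBall c T) → ∀ y ∈ closedBall c T',
      |u y| ≤ C * ∫ x in ball c T, |u x| * g x := by
  have := sub_pos.2 hT'
  obtain ⟨C, hC, hle⟩ := exists_dist_pow_mul_abs_le_setIntegral_abs_mul hg0 hg hb hδ hlow hT
  refine ⟨C / (T - T') ^ (k + 1), by positivity, fun u hu y hy => ?_⟩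
  rw [div_mul_eq_mul_div, le_div_iff₀ (by positivity), mul_comm]
  calc (T - T') ^ (k + 1) * |u y| ≤ (T - dist y c) ^ (k + 1) * |u y| := by
        gcongr
        exact hy
    _ ≤ C * ∫ x in ball c T, |u x| * g x := hle u hu y (closedBall_subset_ball hT' hy)

end InteriorEstimate

section ThreeBalls

variable {E : Type*} [NormedAddCommGroup E] [InnerProductSpace ℝ E] [FiniteDimensional ℝ E]
  {u v : E → ℝ} {c : E} {R R' r ρ T M N : ℝ}

lemma abs_pairing_univ_le [MeasurableSpace E] [BorelSpace E] (hr : 0 < ρ) (hR' : 0 < R')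
    (hM : ∀ x ∈ ball c ρ, |u x| ≤ M) (hN : ∀ x ∈ ball c R', |v x| ≤ N) :
    |pairing univ u v c ρ R'| ≤ M * N * volume.real (ball (0 : E) 1) := by
  rw [pairing, ← Real.norm_eq_abs]
  refine norm_setIntegral_le_of_norm_le_const measure_ball_lt_top fun x hx => ?_
  have hux := hM _ (add_smul_mem_ball_of_mem_unitBall hr hx)
  rw [indicator_univ, norm_mul]
  exact mul_le_mul hux (hN _ (add_smul_mem_ball_of_mem_unitBall hR' hx)) (abs_nonneg _)
    ((abs_nonneg _).trans hux)

lemma setIntegral_abs_mul_abs_le [MeasurableSpace E] [BorelSpace E]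
    (hu : HarmonicOnNhd u (ball c R)) (hv : HarmonicOnNhd v (ball c R))
    (hsign : (∀ x ∈ ball c R, 0 ≤ u x * v x) ∨ ∀ x ∈ ball c R, u x * v x ≤ 0)
    (hr : r ∈ Ioo 0 R) (hρ : ρ ∈ Ioo 0 R) (hR' : R' ∈ Ioo 0 R) (h : r * r = ρ * R')
    (hM : ∀ x ∈ ball c ρ, |u x| ≤ M) (hN : ∀ x ∈ ball c R', |v x| ≤ N) :
    ∫ x in ball c r, |u x| * |v x|
      ≤ r ^ Module.finrank ℝ E * (M * N * volume.real (ball (0 : E) 1)) := by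
  have hsub : ball c r ⊆ ball c R := ball_subset_ball hr.2.le
  have hle : ∫ x in ball c r, |u x| * |v x| ≤ |∫ x in ball c r, u x * v x| := by
    rcases hsign with hpos | hneg
    · refine (setIntegral_congr_fun measurableSet_ball fun x hx => ?_).trans_le (le_abs_self _)
      simp only [← abs_mul, abs_of_nonneg (hpos x (hsub hx))]
    · refine (setIntegral_congr_fun (g := fun x => -(u x * v x)) measurableSet_ball
        fun x hx => ?_).trans_le ((integral_neg _).trans_le (neg_le_abs _))
      simp only [← abs_mul, abs_of_nonpos (hneg x (hsub hx))]
  have hpair : ∫ x in ball c r, u x * v x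
      = r ^ Module.finrank ℝ E * pairing univ u v c ρ R' := by
    rw [setIntegral_ball_eq_mul_setIntegral_unitBall _ _ hr.1,
      ← pairing_eq_of_mul_eq MeasurableSet.univ hu hv (by simp) hr hr hρ hR' h, pairing,
      indicator_univ]
    rfl
  rw [hpair, abs_mul, abs_of_pos (pow_pos hr.1 _)] at hle
  exact hle.trans (mul_le_mul_of_nonneg_left (abs_pairing_univ_le hρ.1 hR'.1 hM hN)
    (pow_pos hr.1 _).le)

lemma exists_abs_le_mul_of_abs_le_on_ball (hv : HarmonicOnNhd v (ball c R))
    (hne : ∀ x ∈ ball c R, ¬∀ᶠ y in 𝓝 x, v y = 0) (hρ : ρ ∈ Ioo 0 R) (hT : T ^ 2 < ρ * R) :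
    ∃ C, ∀ u : E → ℝ, HarmonicOnNhd u (ball c R) →
      ((∀ x ∈ ball c R, 0 ≤ u x * v x) ∨ ∀ x ∈ ball c R, u x * v x ≤ 0) →
      ∀ M, (∀ x ∈ ball c ρ, |u x| ≤ M) → ∀ x ∈ closedBall c T, |u x| ≤ C * M := by
  borelize E
  obtain ⟨R', hmax, hR'R⟩ := exists_between (max_lt hρ.2 ((div_lt_iff₀' hρ.1).2 hT))
  have hρR' : ρ < R' := (le_max_left _ _).trans_lt hmax
  have hTR' : T ^ 2 < ρ * R' := (div_lt_iff₀' hρ.1).1 ((le_max_right _ _).trans_lt hmax)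
  have hR' : R' ∈ Ioo 0 R := ⟨hρ.1.trans hρR', hR'R⟩
  set r := √(ρ * R')
  have hrr : r * r = ρ * R' := Real.mul_self_sqrt (mul_pos hρ.1 hR'.1).le
  have hr0 : 0 < r := Real.sqrt_pos.2 (mul_pos hρ.1 hR'.1)
  have hr : r ∈ Ioo 0 R := ⟨hr0, by nlinarith [hρ.1, hρ.2, hR'.1, hR'.2]⟩
  have hTr : T < r := Real.lt_sqrt_of_sq_lt hTR'
  have hKR : closedBall c r ⊆ ball c R := closedBall_subset_ball hr.2
  obtain ⟨δ, hδ, b, hb, k, hlow⟩ := exists_mul_pow_le_setIntegral_abs isOpen_ball hv hne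
    (isCompact_closedBall c r) hKR
  obtain ⟨C, hC, hint⟩ := exists_abs_le_setIntegral_abs_mul (g := fun x => |v x|)
    (fun x => abs_nonneg _) ((hv.continuousOn.abs.mono hKR).integrableOn_compact
      (isCompact_closedBall c r)) hb hδ (fun x hx => hlow x (ball_subset_closedBall hx)) hr0 hTr
  obtain ⟨N, hN⟩ := exists_bound_of_harmonicOnNhd hv (isCompact_closedBall c R')
    (closedBall_subset_ball hR'R)
  refine ⟨C * (r ^ Module.finrank ℝ E * (N * volume.real (ball (0 : E) 1))),
    fun u hu hsign M hM x hx => (hint u (hu.mono hKR) x hx).trans ?_⟩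
  calc C * ∫ x in ball c r, |u x| * |v x|
      ≤ C * (r ^ Module.finrank ℝ E * (M * N * volume.real (ball (0 : E) 1))) :=
        mul_le_mul_of_nonneg_left (setIntegral_abs_mul_abs_le hu hv hsign hr hρ hR' hrr hM
          fun x hx => (hN x (ball_subset_closedBall hx)).1) hC.le
    _ = _ := by ring

end ThreeBalls

section Comparison

/-- The family `𝓕` is controlled on `s` by its values at `y₀`: one constant `C` satisfies
`|u x| ≤ C * |u y₀|` for all `u ∈ 𝓕` and `x ∈ s`. -/
def ControlledOn {X : Type*} (𝓕 : Set (X → ℝ)) (y₀ : X) (s : Set X) : Prop :=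
  ∃ C, ∀ u ∈ 𝓕, ∀ x ∈ s, |u x| ≤ C * |u y₀|

section

variable {X : Type*} {𝓕 : Set (X → ℝ)} {y₀ : X} {s t : Set X}

lemma ControlledOn.mono (ht : ControlledOn 𝓕 y₀ t) (hst : s ⊆ t) : ControlledOn 𝓕 y₀ s :=
  ht.imp fun _ hC u hu x hx => hC u hu x (hst hx)

lemma ControlledOn.union (hs : ControlledOn 𝓕 y₀ s) (ht : ControlledOn 𝓕 y₀ t) :
    ControlledOn 𝓕 y₀ (s ∪ t) := by
  obtain ⟨C, hC⟩ := hs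
  obtain ⟨C', hC'⟩ := ht
  refine ⟨max C C', fun u hu x hx => ?_⟩
  rcases hx with hx | hx
  · exact (hC u hu x hx).trans (mul_le_mul_of_nonneg_right (le_max_left _ _) (abs_nonneg _))
  · exact (hC' u hu x hx).trans (mul_le_mul_of_nonneg_right (le_max_right _ _) (abs_nonneg _))

lemma controlledOn_of_isCompact [TopologicalSpace X] {K : Set X} (hK : IsCompact K)
    (hloc : ∀ x ∈ K, ∃ s ∈ 𝓝 x, ControlledOn 𝓕 y₀ s) : ControlledOn 𝓕 y₀ K :=
  hK.induction_on ⟨0, fun _ _ _ hx => hx.elim⟩ (fun _ _ hst ht => ht.mono hst)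
    (fun _ _ hs ht => hs.union ht) fun x hx =>
      (hloc x hx).imp fun _ hs => ⟨mem_nhdsWithin_of_mem_nhds hs.1, hs.2⟩

end

variable {E : Type*} [NormedAddCommGroup E] [InnerProductSpace ℝ E] [FiniteDimensional ℝ E]
  {u v : E → ℝ} {Ω K : Set E} {c y₀ x : E} {R : ℝ}

lemma abs_le_two_pow_mul_of_harmonicOnNhd_of_ne_zero (hu : HarmonicOnNhd u (ball x R))
    (h0 : ∀ y ∈ ball x R, u y ≠ 0) :
    ∀ y ∈ ball x (R / 2), |u y| ≤ 2 ^ Module.finrank ℝ E * |u x| := by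
  intro y hy
  have hR : 0 < R / 2 := dist_nonneg.trans_lt hy
  have hsub : ball x (R / 2) ⊆ ball x R := ball_subset_ball (by linarith)
  have hratio : R / (R - dist y x) ≤ 2 := by
    rw [div_le_iff₀ (by linarith [mem_ball.1 hy])]
    linarith [mem_ball.1 hy]
  have hpow : (R / (R - dist y x)) ^ Module.finrank ℝ E ≤ 2 ^ Module.finrank ℝ E :=
    pow_le_pow_left₀ (div_nonneg (by linarith) (by linarith [mem_ball.1 hy])) hratio _
  have key (w : E → ℝ) (hw : HarmonicOnNhd w (ball x R)) (hw0 : ∀ z ∈ ball x R, 0 ≤ w z) :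
      |w y| ≤ 2 ^ Module.finrank ℝ E * |w x| := by
    have hx0 := hw0 x (mem_ball_self (by linarith))
    rw [abs_of_nonneg (hw0 y (hsub hy)), abs_of_nonneg hx0]
    exact (le_mul_of_harmonicOnNhd_of_nonneg hw hw0 (hsub hy)).trans
      (mul_le_mul_of_nonneg_right hpow hx0)
  rcases forall_nonneg_or_forall_nonpos_of_isPreconnected (convex_ball x R).isPreconnected
    hu.continuousOn h0 with hpos | hneg
  · exact key u hu hpos
  · simpa using key (-u) hu.neg fun z hz => neg_nonneg.2 (hneg z hz)

/-- The harmonic functions on `Ω` with the same zeros in `Ω` as `v`. -/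
def harmonicWithZerosOf (v : E → ℝ) (Ω : Set E) : Set (E → ℝ) :=
  {u | HarmonicOnNhd u Ω ∧ ∀ x ∈ Ω, u x = 0 ↔ v x = 0}

lemma exists_nhds_controlledOn_of_ne_zero (hΩ : IsOpen Ω) (hv : ContinuousOn v Ω) (hy₀ : y₀ ∈ Ω)
    (hvy₀ : v y₀ ≠ 0) : ∃ s ∈ 𝓝 y₀, ControlledOn (harmonicWithZerosOf v Ω) y₀ s := by
  obtain ⟨R, hR, hball⟩ := Metric.eventually_nhds_iff_ball.1 ((hΩ.eventually_mem hy₀).and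
    ((hv.continuousAt (hΩ.mem_nhds hy₀)).eventually_ne hvy₀))
  exact ⟨ball y₀ (R / 2), ball_mem_nhds y₀ (half_pos hR), 2 ^ Module.finrank ℝ E,
    fun u hu => abs_le_two_pow_mul_of_harmonicOnNhd_of_ne_zero
      (hu.1.mono fun y hy => (hball y hy).1)
      fun y hy h => (hball y hy).2 ((hu.2 y (hball y hy).1).1 h)⟩

lemma controlledOn_closedBall_of_controlledOn_ball (hΩ : IsOpen Ω) (hΩc : IsPreconnected Ω)
    (hv : HarmonicOnNhd v Ω) (hne : ∀ x ∈ Ω, ¬∀ᶠ y in 𝓝 x, v y = 0) {ρ T : ℝ}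
    (hR : ball c R ⊆ Ω) (hρ : ρ ∈ Ioo 0 R) (hT : T ^ 2 < ρ * R)
    (hs : ControlledOn (harmonicWithZerosOf v Ω) y₀ (ball c ρ)) :
    ControlledOn (harmonicWithZerosOf v Ω) y₀ (closedBall c T) := by
  obtain ⟨C, hC⟩ := hs
  obtain ⟨C', hC'⟩ := exists_abs_le_mul_of_abs_le_on_ball (hv.mono hR)
    (fun x hx => hne x (hR hx)) hρ hT
  refine ⟨C' * C, fun u hu x hx => ?_⟩
  have hsign := mul_nonneg_or_mul_nonpos_of_harmonicOnNhd hΩ hΩc hu.1 hv hu.2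
  rw [mul_assoc]
  exact hC' u (hu.1.mono hR) (hsign.imp (fun h z hz => h z (hR hz)) fun h z hz => h z (hR hz))
    _ (hC u hu) x hx

theorem controlledOn_harmonicWithZerosOf (hΩ : IsOpen Ω) (hΩc : IsPreconnected Ω)
    (hK : IsCompact K) (hKΩ : K ⊆ Ω) (hv : HarmonicOnNhd v Ω) (hy₀ : y₀ ∈ Ω) (hvy₀ : v y₀ ≠ 0) :
    ControlledOn (harmonicWithZerosOf v Ω) y₀ K := by
  have hne (x : E) (hx : x ∈ Ω) : ¬∀ᶠ y in 𝓝 x, v y = 0 := fun h =>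
    hvy₀ (eq_zero_of_harmonicOnNhd_of_eventually_eq_zero hΩ hΩc hv hx h y₀ hy₀)
  let S : Set E := {x | ∃ s ∈ 𝓝 x, ControlledOn (harmonicWithZerosOf v Ω) y₀ s}
  have hS : IsOpen S := isOpen_iff_mem_nhds.2 fun x ⟨s, hs, hC⟩ =>
    (eventually_mem_nhds_iff.2 hs).mono fun y hy => ⟨s, hy, hC⟩
  suffices hΩS : Ω ⊆ S from controlledOn_of_isCompact hK fun x hx => hΩS (hKΩ hx)
  refine subset_of_forall_ball_subset_imp_closedBall_subset hΩ hΩc hS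
    ⟨y₀, hy₀, exists_nhds_controlledOn_of_ne_zero hΩ hv.continuousOn hy₀ hvy₀⟩
    fun c t ht hcΩ hcS x hx => ?_
  have hinner : ControlledOn (harmonicWithZerosOf v Ω) y₀ (closedBall c (3 / 4 * t)) :=
    controlledOn_of_isCompact (isCompact_closedBall _ _)
      fun y hy => hcS (closedBall_subset_ball (by linarith) hy)
  exact ⟨closedBall c (5 / 4 * t), closedBall_mem_nhds_of_mem
    (closedBall_subset_ball (by linarith) hx),
    controlledOn_closedBall_of_controlledOn_ball hΩ hΩc hv hne (ball_subset_closedBall.trans hcΩ)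
      ⟨by positivity, by linarith⟩ (by nlinarith) (hinner.mono ball_subset_closedBall)⟩

theorem stmt16_general (hΩ : IsOpen Ω) (hΩc : IsPreconnected Ω) (hK : IsCompact K) (hKΩ : K ⊆ Ω)
    (hv : HarmonicOnNhd v Ω) (hy₀ : y₀ ∈ Ω) (hvy₀ : v y₀ ≠ 0) :
    ∃ C > (0 : ℝ), ∀ u : E → ℝ, HarmonicOnNhd u Ω → (∀ x ∈ Ω, u x = 0 ↔ v x = 0) →
      ∀ x ∈ K, |u x| ≤ C * |u y₀| := by
  obtain ⟨C, hC⟩ := controlledOn_harmonicWithZerosOf hΩ hΩc hK hKΩ hv hy₀ hvy₀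
  exact ⟨max C 1, by positivity, fun u hu hz x hx => (hC u ⟨hu, hz⟩ x hx).trans
    (mul_le_mul_of_nonneg_right (le_max_left _ _) (abs_nonneg _))⟩

end Comparison

section EuclideanSpace

variable {n : ℕ} {u v : En n → ℝ} {Ω : Set (En n)}

lemma laplacianAt_eq_laplacian (u : En n → ℝ) (x : En n) : laplacianAt u x = Δ u x := by
  rw [laplacian_eq_iteratedFDeriv_orthonormalBasis u (EuclideanSpace.basisFun (Fin n) ℝ)]
  simp only [laplacianAt, EuclideanSpace.basisFun_apply]

lemma harmonicOnNhd_of_harmonicOnSet (hΩ : IsOpen Ω) (hu : HarmonicOnSet u Ω) :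
    HarmonicOnNhd u Ω := fun _ hx =>
  ⟨hu.1.contDiffAt (hΩ.mem_nhds hx), (hΩ.eventually_mem hx).mono fun y hy =>
    (laplacianAt_eq_laplacian u y).symm.trans (hu.2 y hy)⟩

lemma forall_eq_zero_iff_of_zeroSet_eq (h : zeroSet u Ω = zeroSet v Ω) :
    ∀ x ∈ Ω, u x = 0 ↔ v x = 0 := fun x hx => by
  simpa [zeroSet, hx] using Set.ext_iff.1 h x

end EuclideanSpace

theorem stmt16 (n : ℕ) (v : En n → ℝ)
    (hv : HarmonicOnSet v (ball 0 1))
    (hne : ∃ x ∈ ball (0 : En n) 1, v x ≠ 0) :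
    ∀ y₀ ∈ ball (0 : En n) (1/2) \ zeroSet v (ball 0 1),
      ∃ C₁ > (0 : ℝ),
        ∀ u : En n → ℝ, HarmonicOnSet u (ball 0 1) →
          zeroSet u (ball 0 1) = zeroSet v (ball 0 1) →
          ∀ x ∈ ball (0 : En n) (1/2), |u x| ≤ C₁ * |u y₀| := by
  rintro y₀ ⟨hy₀, hvy₀⟩
  have hhalf : closedBall (0 : En n) (1 / 2) ⊆ ball 0 1 := closedBall_subset_ball one_half_lt_one
  have hy₀' : y₀ ∈ ball (0 : En n) 1 := hhalf (ball_subset_closedBall hy₀)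
  obtain ⟨C, hC, hbound⟩ := stmt16_general isOpen_ball (convex_ball 0 1).isPreconnected
    (isCompact_closedBall 0 (1 / 2)) hhalf (harmonicOnNhd_of_harmonicOnSet isOpen_ball hv) hy₀'
    fun h => hvy₀ ⟨hy₀', h⟩
  exact ⟨C, hC, fun u hu hz x hx => hbound u (harmonicOnNhd_of_harmonicOnSet isOpen_ball hu)
    (forall_eq_zero_iff_of_zeroSet_eq hz) x (ball_subset_closedBall hx)⟩
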